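/- Let (X, σ_X) be a one-sided subshift over a finite alphabet, p ∈ ℕ, φ ∈ D_w(X, p), and let Φ = (log φ_n)_{n=1}^∞ ∈ C_sa(X, σ_X) be generated by φ, i.e. φ_n(x) = φ(x_1…x_n). Then Φ has a unique equilibrium state μ. The measure μ is ergodic and satisfies the Gibbs property: there is a constant c > 0 such that c^{-1} e^{−nP} φ(I) ≤ μ(I) ≤ c e^{−nP} φ(I) for all I ∈ L_n(X) and n ∈ ℕ, where P = lim_{n→∞} (1/n) log Σ_{J ∈ L_n(X)} φ(J). Furthermore, Σ_{I ∈ L_n(X)} μ(I) log φ(I) = n Φ_*(μ) + O(1) and Σ_{I ∈ L_n(X)} μ(I) log μ(I) = −n h_μ(σ_X) + O(1) as n → ∞. -/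

import Mathlib

open MeasureTheory Filter Topology
open scoped Classical ENNReal NNReal

noncomputable section

/-- The left shift on one-sided sequences. -/
def shiftMap {A : Type} : (ℕ → A) → (ℕ → A) := fun x n => x (n + 1)

/-- The cylinder set of a finite word. -/
def cyl {A : Type} (I : List A) : Set (ℕ → A) :=
  {x | ∀ i : Fin I.length, x i = I.get i}

/-- Membership of a word in the language of `X`. -/
def Lang {A : Type} (X : Set (ℕ → A)) (I : List A) : Prop :=
  (cyl I ∩ X).Nonempty

/-- `X` is a (nonempty) one-sided subshift. -/
def IsSubshift {A : Type} [TopologicalSpace A] (X : Set (ℕ → A)) : Prop :=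
  X.Nonempty ∧ IsCompact X ∧ shiftMap '' X ⊆ X

/-- weak `p`-specification -/
def WeakSpecification {A : Type} (X : Set (ℕ → A)) (p : ℕ) : Prop :=
  ∀ I J : List A, Lang X I → Lang X J →
    ∃ K : List A, K.length ≤ p ∧ Lang X (I ++ K ++ J)

/-- `p`-specification -/
def Specification {A : Type} (X : Set (ℕ → A)) (p : ℕ) : Prop :=
  ∀ I J : List A, Lang X I → Lang X J →
    ∃ K : List A, K.length = p ∧ Lang X (I ++ K ++ J)

/-- invariant probability measures supported on `X` (predicate on plain measures) -/
def InvOn {A : Type} [MeasurableSpace A] (X : Set (ℕ → A)) (μ : Measure (ℕ → A)) : Prop :=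
  IsProbabilityMeasure μ ∧ μ.map shiftMap = μ ∧ μ X = 1

/-- the set of shift-invariant probability measures on `X` -/
def MInv {A : Type} [MeasurableSpace A] (X : Set (ℕ → A)) :
    Set (ProbabilityMeasure (ℕ → A)) :=
  {μ | (μ : Measure (ℕ → A)).map shiftMap = (μ : Measure (ℕ → A)) ∧
    (μ : Measure (ℕ → A)) X = 1}

/-- measure of a word: `μ([I] ∩ X)` -/
def mw {A : Type} [MeasurableSpace A] (X : Set (ℕ → A)) (μ : Measure (ℕ → A))
    (I : List A) : ℝ :=
  (μ (cyl I ∩ X)).toReal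

/-- the initial word of length `n` of a sequence -/
def wordOf {A : Type} (x : ℕ → A) (n : ℕ) : List A := List.ofFn (fun i : Fin n => x i)

/-- `n`-block entropy -/
def Hblock {A : Type} [Fintype A] [MeasurableSpace A] (X : Set (ℕ → A))
    (μ : Measure (ℕ → A)) (n : ℕ) : ℝ :=
  -∑ w : Fin n → A, mw X μ (List.ofFn w) * Real.log (mw X μ (List.ofFn w))

/-- measure-theoretic entropy (the limit exists for invariant measures; `liminf` realizes it) -/
def ent {A : Type} [Fintype A] [MeasurableSpace A] (X : Set (ℕ → A))
    (μ : Measure (ℕ → A)) : ℝ :=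
  liminf (fun n : ℕ => Hblock X μ n / n) atTop

/-- extended logarithm: `log t`, with value `⊥` for `t ≤ 0` -/
def elog (t : ℝ) : EReal := if t ≤ 0 then ⊥ else ((Real.log t : ℝ) : EReal)

/-- the integral `∫ log g dμ`, valued in `ℝ ∪ {−∞}` -/
def intlog {Ω : Type*} [MeasurableSpace Ω] (μ : Measure Ω) (g : Ω → ℝ) : EReal :=
  ((∫⁻ x, ENNReal.ofReal (Real.log (g x)) ∂μ : ℝ≥0∞) : EReal) -
    ((∫⁻ x, (if g x ≤ 0 then (⊤ : ℝ≥0∞) else ENNReal.ofReal (-Real.log (g x))) ∂μ : ℝ≥0∞) : EReal)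

/-- sub-additive potential `Φ = (log φ_n)_{n ≥ 1}` -/
def SubaddPot {A : Type} [TopologicalSpace A] (X : Set (ℕ → A))
    (φ : ℕ → (ℕ → A) → ℝ) : Prop :=
  (∀ n, 1 ≤ n → ContinuousOn (φ n) X) ∧
  (∀ n, 1 ≤ n → ∀ x ∈ X, 0 ≤ φ n x) ∧
  ∃ c > (0:ℝ), ∀ n m : ℕ, 1 ≤ n → 1 ≤ m → ∀ x ∈ X,
    φ (n + m) x ≤ c * φ n x * φ m (shiftMap^[n] x)

/-- `Φ_*(μ) = lim (1/n) ∫ log φ_n dμ` (realized as a `liminf` in `EReal`) -/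
def PhiStar {A : Type} [MeasurableSpace A] (μ : Measure (ℕ → A))
    (φ : ℕ → (ℕ → A) → ℝ) : EReal :=
  liminf (fun n : ℕ => (((n : ℝ)⁻¹ : ℝ) : EReal) * intlog μ (φ n)) atTop

/-- sub-multiplicative function on the language of `X` -/
def Submult {A : Type} (X : Set (ℕ → A)) (φ : List A → ℝ) : Prop :=
  (∀ I, Lang X I → 0 ≤ φ I) ∧ φ [] = 1 ∧
  ∃ c > (0:ℝ), ∀ I J : List A, Lang X (I ++ J) → φ (I ++ J) ≤ c⁻¹ * φ I * φ J

/-- the potential generated by a word function -/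
def genPot {A : Type} (φ : List A → ℝ) : ℕ → (ℕ → A) → ℝ := fun n x => φ (wordOf x n)

/-- the scaled potential `cΦ = (log φ_n^c)` -/
def scPot {Ω : Type*} (c : ℝ) (φ : ℕ → Ω → ℝ) : ℕ → Ω → ℝ := fun n x => φ n x ^ c

/-- the "pressure value" `Φ_*(μ) + h_μ` -/
def eqVal {A : Type} [Fintype A] [MeasurableSpace A] (X : Set (ℕ → A))
    (φ : ℕ → (ℕ → A) → ℝ) (μ : ProbabilityMeasure (ℕ → A)) : EReal :=
  PhiStar (μ : Measure (ℕ → A)) φ + ((ent X (μ : Measure (ℕ → A)) : ℝ) : EReal)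

/-- the set of equilibrium states of `Φ` -/
def EqSet {A : Type} [Fintype A] [MeasurableSpace A] (X : Set (ℕ → A))
    (φ : ℕ → (ℕ → A) → ℝ) : Set (ProbabilityMeasure (ℕ → A)) :=
  {μ | μ ∈ MInv X ∧ eqVal X φ μ = ⨆ η ∈ MInv X, eqVal X φ η}

/-- sequence map induced by a one-block map -/
def blockMap {A B : Type} (π : A → B) : (ℕ → A) → (ℕ → B) := fun x n => π (x n)

/-- pushforward of a probability measure under a one-block map -/
def pushM {A B : Type} [MeasurableSpace A] [MeasurableSpace B] (π : A → B)
    (μ : ProbabilityMeasure (ℕ → A)) : Measure (ℕ → B) :=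
  (μ : Measure (ℕ → A)).map (blockMap π)

/-- conditional equilibrium states of `Φ` over `ν` -/
def CondEqSet {A B : Type} [Fintype A] [MeasurableSpace A] [MeasurableSpace B]
    (X : Set (ℕ → A)) (π : A → B) (φ : ℕ → (ℕ → A) → ℝ) (ν : Measure (ℕ → B)) :
    Set (ProbabilityMeasure (ℕ → A)) :=
  {μ | μ ∈ MInv X ∧ pushM π μ = ν ∧
    eqVal X φ μ = ⨆ η ∈ {η | η ∈ MInv X ∧ pushM π η = ν}, eqVal X φ η}

/-- the projected word function `ψ(J) = Σ_{I : πI = J} φ(I)` -/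
def psiProj {A B : Type} [Fintype A] (X : Set (ℕ → A)) (π : A → B) (φ : List A → ℝ)
    (J : List B) : ℝ :=
  ∑ w : Fin J.length → A,
    if Lang X (List.ofFn w) ∧ List.map π (List.ofFn w) = J then φ (List.ofFn w) else 0

/-- `φ^{(2)}(J) = (Σ_{I : πI = J} φ(I)^{1/a₁})^{a₁}` -/
def phiTwo {A B : Type} [Fintype A] (X : Set (ℕ → A)) (π : A → B) (φ : List A → ℝ)
    (a₁ : ℝ) (J : List B) : ℝ :=
  (∑ w : Fin J.length → A,
    if Lang X (List.ofFn w) ∧ List.map π (List.ofFn w) = J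
    then φ (List.ofFn w) ^ a₁⁻¹ else 0) ^ a₁

/-- `a`-weighted pressure value for `k = 2` -/
def wVal2 {A B : Type} [Fintype A] [Fintype B] [MeasurableSpace A] [MeasurableSpace B]
    (X : Set (ℕ → A)) (Y : Set (ℕ → B)) (π : A → B) (φ : ℕ → (ℕ → A) → ℝ)
    (a₁ a₂ : ℝ) (μ : ProbabilityMeasure (ℕ → A)) : EReal :=
  PhiStar (μ : Measure (ℕ → A)) φ +
    ((a₁ * ent X (μ : Measure (ℕ → A)) + a₂ * ent Y (pushM π μ) : ℝ) : EReal)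

/-- the set of `a`-weighted equilibrium states, `k = 2` -/
def WEqSet2 {A B : Type} [Fintype A] [Fintype B] [MeasurableSpace A] [MeasurableSpace B]
    (X : Set (ℕ → A)) (Y : Set (ℕ → B)) (π : A → B) (φ : ℕ → (ℕ → A) → ℝ)
    (a₁ a₂ : ℝ) : Set (ProbabilityMeasure (ℕ → A)) :=
  {μ | μ ∈ MInv X ∧ wVal2 X Y π φ a₁ a₂ μ = ⨆ η ∈ MInv X, wVal2 X Y π φ a₁ a₂ η}

/-- convexity of a set of probability measures -/
def ConvexPM {Ω : Type*} [MeasurableSpace Ω] (S : Set (ProbabilityMeasure Ω)) : Prop :=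
  ∀ μ₁ ∈ S, ∀ μ₂ ∈ S, ∀ t : ℝ, 0 ≤ t → t ≤ 1 → ∀ μ : ProbabilityMeasure Ω,
    (μ : Measure Ω) = ENNReal.ofReal t • (μ₁ : Measure Ω) +
      ENNReal.ofReal (1 - t) • (μ₂ : Measure Ω) → μ ∈ S

/-- extreme points of a set of probability measures -/
def IsExtremePM {Ω : Type*} [MeasurableSpace Ω] (S : Set (ProbabilityMeasure Ω))
    (μ : ProbabilityMeasure Ω) : Prop :=
  μ ∈ S ∧ ∀ μ₁ ∈ S, ∀ μ₂ ∈ S, ∀ t : ℝ, 0 < t → t < 1 →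
    (μ : Measure Ω) = ENNReal.ofReal t • (μ₁ : Measure Ω) +
      ENNReal.ofReal (1 - t) • (μ₂ : Measure Ω) → μ₁ = μ₂

/-- the class `Ω_w(A*, p)` -/
def OmegaW {A : Type} [Fintype A] (p : ℕ) (f : List A → ℝ) : Prop :=
  (∀ I, 0 ≤ f I ∧ f I ≤ 1) ∧
  ∃ c > (0:ℝ),
    (∀ n : ℕ, ∑ w : Fin n → A, f (List.ofFn w) = 1) ∧
    (∀ I J : List A, ∃ K : List A, K.length ≤ p ∧ c * (f I * f J) ≤ f (I ++ K ++ J)) ∧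
    (∀ I : List A, ∃ i j : A, c * f I ≤ f (i :: I) ∧ c * f I ≤ f (I ++ [j]))

/-- the class `Ω(A*, p)` -/
def OmegaS {A : Type} [Fintype A] (p : ℕ) (f : List A → ℝ) : Prop :=
  (∀ I, 0 ≤ f I ∧ f I ≤ 1) ∧
  ∃ c > (0:ℝ),
    (∀ n : ℕ, ∑ w : Fin n → A, f (List.ofFn w) = 1) ∧
    (∀ I J : List A, ∃ K : List A, K.length = p ∧ c * (f I * f J) ≤ f (I ++ K ++ J))

/-- `f_{m,n}(I)` -/
def fmn {A : Type} [Fintype A] (f : List A → ℝ) (m n : ℕ) (I : List A) : ℝ :=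
  ∑ u : Fin m → A, ∑ v : Fin n → A, f (List.ofFn u ++ I ++ List.ofFn v)

/-- `f*(I) = sup_{m,n} f_{m,n}(I)` -/
def fstar {A : Type} [Fintype A] (f : List A → ℝ) (I : List A) : ℝ :=
  ⨆ m : ℕ, ⨆ n : ℕ, fmn f m n I

/-- the class `D_w(X, p)` -/
def Dw {A : Type} (X : Set (ℕ → A)) (p : ℕ) (φ : List A → ℝ) : Prop :=
  (∀ I, Lang X I → 0 ≤ φ I) ∧ (∃ I, Lang X I ∧ I ≠ [] ∧ 0 < φ I) ∧
  ∃ c : ℝ, 0 < c ∧ c ≤ 1 ∧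
    (∀ I J : List A, Lang X (I ++ J) → φ (I ++ J) ≤ c⁻¹ * φ I * φ J) ∧
    (∀ I J : List A, Lang X I → Lang X J →
      ∃ K : List A, K.length ≤ p ∧ Lang X (I ++ K ++ J) ∧
        c * (φ I * φ J) ≤ φ (I ++ K ++ J))

/-- the class `D(X, p)` -/
def Ds {A : Type} (X : Set (ℕ → A)) (p : ℕ) (φ : List A → ℝ) : Prop :=
  (∀ I, Lang X I → 0 ≤ φ I) ∧ (∃ I, Lang X I ∧ I ≠ [] ∧ 0 < φ I) ∧
  ∃ c : ℝ, 0 < c ∧ c ≤ 1 ∧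
    (∀ I J : List A, Lang X (I ++ J) → φ (I ++ J) ≤ c⁻¹ * φ I * φ J) ∧
    (∀ I J : List A, Lang X I → Lang X J →
      ∃ K : List A, K.length = p ∧ Lang X (I ++ K ++ J) ∧
        c * (φ I * φ J) ≤ φ (I ++ K ++ J))

end

noncomputable section

/-- iterated one-block maps along a chain of alphabets: `tauFrom π j i : B j → B (j+i)` -/
def tauFrom {B : ℕ → Type} (π : ∀ i, B i → B (i+1)) (j : ℕ) : (i : ℕ) → B j → B (j + i)
  | 0 => id
  | (i+1) => fun a => π (j + i) (tauFrom π j i a)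

/-- weighted pressure value along a chain starting at index `j`, with `k` weights `w 0, …, w (k-1)` -/
def wValGen {B : ℕ → Type} [∀ i, Fintype (B i)] [∀ i, MeasurableSpace (B i)]
    (π : ∀ i, B i → B (i+1)) (X : ∀ i, Set (ℕ → B i)) (j k : ℕ) (w : ℕ → ℝ)
    (φ : ℕ → (ℕ → B j) → ℝ) (μ : ProbabilityMeasure (ℕ → B j)) : EReal :=
  PhiStar (μ : Measure (ℕ → B j)) φ +
    ((∑ i ∈ Finset.range k, w i *
      ent (X (j + i)) ((μ : Measure (ℕ → B j)).map (blockMap (tauFrom π j i))) : ℝ) : EReal)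

/-- weighted equilibrium states along a chain -/
def wEqSetGen {B : ℕ → Type} [∀ i, Fintype (B i)] [∀ i, MeasurableSpace (B i)]
    (π : ∀ i, B i → B (i+1)) (X : ∀ i, Set (ℕ → B i)) (j k : ℕ) (w : ℕ → ℝ)
    (φ : ℕ → (ℕ → B j) → ℝ) : Set (ProbabilityMeasure (ℕ → B j)) :=
  {μ | μ ∈ MInv (X j) ∧
    wValGen π X j k w φ μ = ⨆ η ∈ MInv (X j), wValGen π X j k w φ η}

end

/-!
Averaging the measures that give each word of length `2N` its normalized weight over the first `N`
shifts and passing to a limit yields an invariant Gibbs measure `μ`: summing over all bridge words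
compares the weights of `u I v`, summed over `u` and `v`, with the weight of `I` up to a constant.
The bridge condition passes from the weights to `μ` and makes `μ` ergodic. The Gibbs property
bounds the relative entropy with respect to `μ`, on words of any length, of an arbitrary
equilibrium state; hence that state is absolutely continuous with respect to `μ`, so it equals `μ`
by ergodicity. For `μ` itself, energy is nearly subadditive, entropy is subadditive and their sum
is linear up to `O(1)`, so each of the two is.
-/

noncomputable section

theorem exists_forall_abs_sub_mul_le {a : ℕ → ℝ} {C : ℝ}
    (h : ∀ m n, |a (m + n) - a m - a n| ≤ C) : ∃ L : ℝ, ∀ n : ℕ, |a n - n * L| ≤ C := by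
  have upper : Subadditive fun n ↦ a n + C := fun m n ↦ by linarith [(abs_le.1 (h m n)).2]
  have lower : Subadditive fun n ↦ -a n + C := fun m n ↦ by linarith [(abs_le.1 (h m n)).1]
  have cross (m n : ℕ) : n * (a m - C) ≤ m * (a n + C) := by
    have h₁ := upper.apply_mul_add_le m n 0
    have h₂ := lower.apply_mul_add_le n m 0
    simp only [add_zero, mul_comm n m] at h₁ h₂
    linarith
  have bdd : BddAbove (Set.range fun m : ℕ ↦ (a (m + 1) - C) / (m + 1 : ℕ)) := by
    refine ⟨a 1 + C, ?_⟩
    rintro _ ⟨m, rfl⟩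
    rw [div_le_iff₀ (by positivity)]
    simpa [mul_comm] using cross (m + 1) 1
  refine ⟨⨆ m : ℕ, (a (m + 1) - C) / (m + 1 : ℕ), fun n ↦ ?_⟩
  rcases n with _ | n
  · simpa using h 0 0
  have hn : (0 : ℝ) < (n + 1 : ℕ) := by positivity
  rw [abs_le, neg_le_sub_iff_le_add, sub_le_iff_le_add, mul_comm]
  constructor
  · rw [← le_div_iff₀ hn]
    refine ciSup_le fun m ↦ ?_
    rw [div_le_div_iff₀ (by positivity) hn, mul_comm, mul_comm (a (n + 1) + C)]
    exact cross _ _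
  · rw [← sub_le_iff_le_add', ← div_le_iff₀ hn]
    exact le_ciSup bdd n

theorem tendsto_div_of_abs_sub_mul_le {a : ℕ → ℝ} {L C : ℝ} (h : ∀ n : ℕ, |a n - n * L| ≤ C) :
    Tendsto (fun n : ℕ ↦ a n / n) atTop (𝓝 L) := by
  rw [tendsto_iff_norm_sub_tendsto_zero]
  refine squeeze_zero' (Eventually.of_forall fun _ ↦ norm_nonneg _) ?_
    (tendsto_const_div_atTop_nhds_zero_nat C)
  filter_upwards [eventually_gt_atTop 0] with n hn
  have hn : (0 : ℝ) < n := by exact_mod_cast hn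
  rw [div_sub' hn.ne', norm_div, Real.norm_eq_abs, Real.norm_of_nonneg hn.le]
  gcongr
  exact h n

section Words

variable {A : Type}

/-- The class `D_w(X, p)` with words outside the language given weight zero: `ψ` is
submultiplicative up to the factor `D`, and supermultiplicative up to `D` after inserting a bridge
word of length at most `p`. -/
structure QuasiMultiplicative (p : ℕ) (D : ℝ) (ψ : List A → ℝ) : Prop where
  one_le : 1 ≤ D
  nonneg : ∀ I, 0 ≤ ψ I
  exists_pos : ∃ I, I ≠ [] ∧ 0 < ψ I
  append_le : ∀ I J, ψ (I ++ J) ≤ D * ψ I * ψ J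
  exists_bridge : ∀ I J, ∃ K : List A, K.length ≤ p ∧ ψ I * ψ J ≤ D * ψ (I ++ K ++ J)

namespace QuasiMultiplicative

variable {p : ℕ} {D : ℝ} {ψ : List A → ℝ}

theorem reverse (h : QuasiMultiplicative p D ψ) : QuasiMultiplicative p D (ψ ∘ List.reverse) where
  one_le := h.one_le
  nonneg _ := h.nonneg _
  exists_pos :=
    let ⟨I, hI, hpos⟩ := h.exists_pos
    ⟨I.reverse, by simpa using hI, by simpa using hpos⟩
  append_le I J := by
    simpa [mul_right_comm] using h.append_le J.reverse I.reverse
  exists_bridge I J :=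
    let ⟨K, hK, hle⟩ := h.exists_bridge J.reverse I.reverse
    ⟨K.reverse, by simpa using hK, by simpa [mul_comm] using hle⟩

theorem pos (h : QuasiMultiplicative p D ψ) : 0 < D := one_pos.trans_le h.one_le

theorem pos_of_append (h : QuasiMultiplicative p D ψ) {I J : List A} (hIJ : 0 < ψ (I ++ J)) :
    0 < ψ I := by
  have : 0 < D * ψ I * ψ J := hIJ.trans_le (h.append_le I J)
  exact pos_of_mul_pos_right (pos_of_mul_pos_left this (h.nonneg J)) h.pos.le

theorem exists_length_ge_pos (h : QuasiMultiplicative p D ψ) (n : ℕ) :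
    ∃ I : List A, n ≤ I.length ∧ 0 < ψ I := by
  obtain ⟨I, hI, hIpos⟩ := h.exists_pos
  induction n with
  | zero => exact ⟨I, Nat.zero_le _, hIpos⟩
  | succ n ih =>
    obtain ⟨J, hJ, hJpos⟩ := ih
    obtain ⟨K, -, hK⟩ := h.exists_bridge I J
    refine ⟨I ++ K ++ J, ?_,
      pos_of_mul_pos_right ((mul_pos hIpos hJpos).trans_le hK) h.pos.le⟩
    have := List.length_pos_iff.2 hI
    simp only [List.length_append]
    lia

end QuasiMultiplicative

variable [Fintype A]

theorem sum_ofFn_append (m n : ℕ) (g : List A → ℝ) :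
    ∑ w : Fin (m + n) → A, g (List.ofFn w) =
      ∑ u : Fin m → A, ∑ v : Fin n → A, g (List.ofFn u ++ List.ofFn v) := by
  rw [← (Fin.appendEquiv m n).sum_comp, Fintype.sum_prod_type]
  simp [Fin.appendEquiv, List.ofFn_fin_append]

theorem sum_ofFn_reverse (n : ℕ) (g : List A → ℝ) :
    ∑ w : Fin n → A, g (List.ofFn w).reverse = ∑ w : Fin n → A, g (List.ofFn w) := by
  refine Fintype.sum_equiv (Fin.revPerm.arrowCongr (Equiv.refl A)) _ _ fun w ↦ ?_
  congr 1
  refine List.ext_getElem (by simp) fun i h₁ h₂ ↦ ?_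
  simp [Fin.rev, Nat.sub_sub, Nat.add_comm]

theorem le_sum_ofFn {g : List A → ℝ} (hg : ∀ w, 0 ≤ g w) (w : List A) :
    g w ≤ ∑ u : Fin w.length → A, g (List.ofFn u) := by
  simpa using Finset.single_le_sum (f := fun u : Fin w.length → A ↦ g (List.ofFn u))
    (fun _ _ ↦ hg _) (Finset.mem_univ w.get)

/-- The `n`-th partition function `∑_{|w| = n} ψ(w)` of a weight on words. -/
def partitionFunction (ψ : List A → ℝ) (n : ℕ) : ℝ := ∑ w : Fin n → A, ψ (List.ofFn w)

/-- The constant with which `QuasiMultiplicative` weights satisfy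
`ψ(I) Z_n ≤ C ∑_{|v| = n} ψ(I v)` and its mirror image, obtained by summing over all bridges. -/
def bridgeConst (p : ℕ) (D : ℝ) (ψ : List A → ℝ) : ℝ :=
  D ^ 2 * ∑ k ∈ Finset.range (p + 1), partitionFunction ψ k

theorem partitionFunction_comp_reverse (ψ : List A → ℝ) (n : ℕ) :
    partitionFunction (ψ ∘ List.reverse) n = partitionFunction ψ n :=
  sum_ofFn_reverse n ψ

namespace QuasiMultiplicative

variable {p : ℕ} {D : ℝ} {ψ : List A → ℝ}

theorem partitionFunction_pos (h : QuasiMultiplicative p D ψ) (n : ℕ) :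
    0 < partitionFunction ψ n := by
  obtain ⟨I, hn, hI⟩ := h.exists_length_ge_pos n
  rw [← List.take_append_drop n I] at hI
  have := (h.pos_of_append hI).trans_le (le_sum_ofFn h.nonneg _)
  rwa [List.length_take_of_le hn] at this

theorem sum_append_le (h : QuasiMultiplicative p D ψ) (I : List A) (n : ℕ) :
    ∑ v : Fin n → A, ψ (I ++ List.ofFn v) ≤ D * ψ I * partitionFunction ψ n := by
  rw [partitionFunction, Finset.mul_sum]
  exact Finset.sum_le_sum fun v _ ↦ h.append_le I _

theorem mul_le_sum_bridge (h : QuasiMultiplicative p D ψ) (I J : List A) :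
    ψ I * ψ J ≤
      D * ∑ k ∈ Finset.range (p + 1), ∑ K : Fin k → A, ψ (I ++ List.ofFn K ++ J) := by
  obtain ⟨K, hK, hle⟩ := h.exists_bridge I J
  refine hle.trans (mul_le_mul_of_nonneg_left ?_ h.pos.le)
  refine (le_sum_ofFn (g := fun K ↦ ψ (I ++ K ++ J)) (fun _ ↦ h.nonneg _) K).trans ?_
  exact Finset.single_le_sum
    (f := fun k ↦ ∑ K : Fin k → A, ψ (I ++ List.ofFn K ++ J))
    (fun _ _ ↦ Finset.sum_nonneg fun _ _ ↦ h.nonneg _) (by simpa [Nat.lt_succ_iff] using hK)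

-- Reading a bridged word `I K J` as `I w` with `|w| = |J| + |K|` and forgetting the last `|K|`
-- letters of `w` moves the bridge out of the way.
theorem sum_bridge_le (h : QuasiMultiplicative p D ψ) (I : List A) (n k : ℕ) :
    ∑ v : Fin n → A, ∑ K : Fin k → A, ψ (I ++ List.ofFn K ++ List.ofFn v) ≤
      D * partitionFunction ψ k * ∑ v : Fin n → A, ψ (I ++ List.ofFn v) := by
  rw [Finset.sum_comm]
  simp only [List.append_assoc]
  rw [← sum_ofFn_append k n fun w ↦ ψ (I ++ w), Nat.add_comm,
    sum_ofFn_append n k fun w ↦ ψ (I ++ w), Finset.mul_sum]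
  refine Finset.sum_le_sum fun v _ ↦ ?_
  simpa only [List.append_assoc, mul_right_comm] using h.sum_append_le (I ++ List.ofFn v) k

theorem mul_partitionFunction_le (h : QuasiMultiplicative p D ψ) (I : List A) (n : ℕ) :
    ψ I * partitionFunction ψ n ≤
      bridgeConst p D ψ * ∑ v : Fin n → A, ψ (I ++ List.ofFn v) :=
  calc ψ I * partitionFunction ψ n
      = ∑ v : Fin n → A, ψ I * ψ (List.ofFn v) := Finset.mul_sum ..
    _ ≤ ∑ v : Fin n → A, D * ∑ k ∈ Finset.range (p + 1), ∑ K : Fin k → A,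
          ψ (I ++ List.ofFn K ++ List.ofFn v) :=
        Finset.sum_le_sum fun v _ ↦ h.mul_le_sum_bridge I _
    _ = D * ∑ k ∈ Finset.range (p + 1), ∑ v : Fin n → A, ∑ K : Fin k → A,
          ψ (I ++ List.ofFn K ++ List.ofFn v) := by
        rw [← Finset.mul_sum, Finset.sum_comm]
    _ ≤ D * ∑ k ∈ Finset.range (p + 1),
          D * partitionFunction ψ k * ∑ v : Fin n → A, ψ (I ++ List.ofFn v) :=
        mul_le_mul_of_nonneg_left (Finset.sum_le_sum fun k _ ↦ h.sum_bridge_le I n k) h.pos.le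
    _ = bridgeConst p D ψ * ∑ v : Fin n → A, ψ (I ++ List.ofFn v) := by
        rw [bridgeConst, ← Finset.sum_mul, ← Finset.mul_sum]
        ring

theorem bridgeConst_pos (h : QuasiMultiplicative p D ψ) : 0 < bridgeConst p D ψ :=
  mul_pos (pow_pos h.pos 2)
    (Finset.sum_pos (fun k _ ↦ h.partitionFunction_pos k) Finset.nonempty_range_add_one)

theorem bridgeConst_comp_reverse :
    bridgeConst p D (ψ ∘ List.reverse) = bridgeConst p D ψ := by
  simp only [bridgeConst, partitionFunction_comp_reverse]

theorem sum_append_left_le (h : QuasiMultiplicative p D ψ) (I : List A) (n : ℕ) :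
    ∑ u : Fin n → A, ψ (List.ofFn u ++ I) ≤ D * ψ I * partitionFunction ψ n := by
  simpa [partitionFunction_comp_reverse, sum_ofFn_reverse n fun u ↦ ψ (u ++ I)] using
    h.reverse.sum_append_le I.reverse n

theorem mul_partitionFunction_le_left (h : QuasiMultiplicative p D ψ) (I : List A) (n : ℕ) :
    ψ I * partitionFunction ψ n ≤
      bridgeConst p D ψ * ∑ u : Fin n → A, ψ (List.ofFn u ++ I) := by
  simpa [partitionFunction_comp_reverse, bridgeConst_comp_reverse,
    sum_ofFn_reverse n fun u ↦ ψ (u ++ I)] using h.reverse.mul_partitionFunction_le I.reverse n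

theorem partitionFunction_add_le (h : QuasiMultiplicative p D ψ) (m n : ℕ) :
    partitionFunction ψ (m + n) ≤ D * partitionFunction ψ m * partitionFunction ψ n := by
  rw [partitionFunction, sum_ofFn_append, partitionFunction, Finset.mul_sum, Finset.sum_mul]
  exact Finset.sum_le_sum fun u _ ↦ h.sum_append_le _ n

theorem partitionFunction_mul_le (h : QuasiMultiplicative p D ψ) (m n : ℕ) :
    partitionFunction ψ m * partitionFunction ψ n ≤
      bridgeConst p D ψ * partitionFunction ψ (m + n) := by
  rw [partitionFunction, Finset.sum_mul, partitionFunction.eq_1 ψ (m + n), sum_ofFn_append,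
    Finset.mul_sum]
  exact Finset.sum_le_sum fun u _ ↦ h.mul_partitionFunction_le _ n

theorem exists_pressure (h : QuasiMultiplicative p D ψ) :
    ∃ P C : ℝ, ∀ n : ℕ, |Real.log (partitionFunction ψ n) - n * P| ≤ C := by
  have hZ := h.partitionFunction_pos
  have hF := h.bridgeConst_pos
  suffices quasiadditive : ∀ m n, |Real.log (partitionFunction ψ (m + n)) -
      Real.log (partitionFunction ψ m) - Real.log (partitionFunction ψ n)| ≤
        max (Real.log D) (Real.log (bridgeConst p D ψ)) by
    obtain ⟨P, hP⟩ := exists_forall_abs_sub_mul_le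
      (a := fun n ↦ Real.log (partitionFunction ψ n)) quasiadditive
    exact ⟨P, _, hP⟩
  intro m n
  have upper := Real.log_le_log (hZ _) (h.partitionFunction_add_le m n)
  have lower := Real.log_le_log (mul_pos (hZ m) (hZ n)) (h.partitionFunction_mul_le m n)
  rw [Real.log_mul (mul_pos h.pos (hZ m)).ne' (hZ n).ne', Real.log_mul h.pos.ne' (hZ m).ne']
    at upper
  rw [Real.log_mul (hZ m).ne' (hZ n).ne', Real.log_mul hF.ne' (hZ _).ne'] at lower
  rw [abs_le]
  constructor
  · linarith [le_max_right (Real.log D) (Real.log (bridgeConst p D ψ))]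
  · linarith [le_max_left (Real.log D) (Real.log (bridgeConst p D ψ))]

theorem fmn_le (h : QuasiMultiplicative p D ψ) (i j : ℕ) (I : List A) :
    fmn ψ i j I ≤ D ^ 2 * (ψ I * partitionFunction ψ i * partitionFunction ψ j) :=
  calc fmn ψ i j I
      ≤ ∑ u : Fin i → A, D * ψ (List.ofFn u ++ I) * partitionFunction ψ j :=
        Finset.sum_le_sum fun u _ ↦ h.sum_append_le _ j
    _ = D * (∑ u : Fin i → A, ψ (List.ofFn u ++ I)) * partitionFunction ψ j := by
        rw [Finset.mul_sum, Finset.sum_mul]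
    _ ≤ D * (D * ψ I * partitionFunction ψ i) * partitionFunction ψ j := by
        have := h.pos
        have := (h.partitionFunction_pos j).le
        gcongr
        exact h.sum_append_left_le I i
    _ = D ^ 2 * (ψ I * partitionFunction ψ i * partitionFunction ψ j) := by ring

theorem mul_partitionFunction_le_fmn (h : QuasiMultiplicative p D ψ) (i j : ℕ) (I : List A) :
    ψ I * partitionFunction ψ i * partitionFunction ψ j ≤ bridgeConst p D ψ ^ 2 * fmn ψ i j I :=
  have hF := h.bridgeConst_pos
  calc ψ I * partitionFunction ψ i * partitionFunction ψ j
      ≤ bridgeConst p D ψ * (∑ u : Fin i → A, ψ (List.ofFn u ++ I)) * partitionFunction ψ j := by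
        have := (h.partitionFunction_pos j).le
        gcongr ?_ * _
        exact h.mul_partitionFunction_le_left I i
    _ = bridgeConst p D ψ * ∑ u : Fin i → A, ψ (List.ofFn u ++ I) * partitionFunction ψ j := by
        rw [mul_assoc, Finset.sum_mul]
    _ ≤ bridgeConst p D ψ * ∑ u : Fin i → A,
          bridgeConst p D ψ * ∑ v : Fin j → A, ψ (List.ofFn u ++ I ++ List.ofFn v) := by
        gcongr _ * ∑ u, ?_
        exact h.mul_partitionFunction_le _ j
    _ = bridgeConst p D ψ ^ 2 * fmn ψ i j I := by
        rw [fmn, ← Finset.mul_sum]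
        ring

theorem fmn_mul_partitionFunction_le (h : QuasiMultiplicative p D ψ) (i j : ℕ) (I : List A) :
    fmn ψ i j I * partitionFunction ψ I.length ≤
      (D * bridgeConst p D ψ) ^ 2 * (ψ I * partitionFunction ψ (i + I.length + j)) := by
  have hZ := h.partitionFunction_pos
  have := h.pos
  have hF := h.bridgeConst_pos
  have := h.nonneg I
  calc fmn ψ i j I * partitionFunction ψ I.length
      ≤ D ^ 2 * (ψ I * partitionFunction ψ i * partitionFunction ψ j) *
          partitionFunction ψ I.length :=
        mul_le_mul_of_nonneg_right (h.fmn_le i j I) (hZ _).le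
    _ = D ^ 2 * ψ I * (partitionFunction ψ i * partitionFunction ψ I.length) *
          partitionFunction ψ j := by ring
    _ ≤ D ^ 2 * ψ I * (bridgeConst p D ψ * partitionFunction ψ (i + I.length)) *
          partitionFunction ψ j := by
        have := (hZ j).le
        gcongr _ * ?_ * _
        exact h.partitionFunction_mul_le _ _
    _ = D ^ 2 * ψ I * bridgeConst p D ψ *
          (partitionFunction ψ (i + I.length) * partitionFunction ψ j) := by ring
    _ ≤ D ^ 2 * ψ I * bridgeConst p D ψ *
          (bridgeConst p D ψ * partitionFunction ψ (i + I.length + j)) := by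
        gcongr _ * ?_
        exact h.partitionFunction_mul_le _ _
    _ = _ := by ring

theorem mul_partitionFunction_add_le (h : QuasiMultiplicative p D ψ) (i j : ℕ) (I : List A) :
    ψ I * partitionFunction ψ (i + I.length + j) ≤
      (D * bridgeConst p D ψ) ^ 2 * (fmn ψ i j I * partitionFunction ψ I.length) := by
  have hZ := h.partitionFunction_pos
  have := h.pos
  have := h.nonneg I
  calc ψ I * partitionFunction ψ (i + I.length + j)
      ≤ ψ I * (D * partitionFunction ψ (i + I.length) * partitionFunction ψ j) := by
        gcongr
        exact h.partitionFunction_add_le _ _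
    _ ≤ ψ I * (D * (D * partitionFunction ψ i * partitionFunction ψ I.length) *
          partitionFunction ψ j) := by
        have := (hZ j).le
        gcongr
        exact h.partitionFunction_add_le _ _
    _ = D ^ 2 * (ψ I * partitionFunction ψ i * partitionFunction ψ j) *
          partitionFunction ψ I.length := by ring
    _ ≤ D ^ 2 * (bridgeConst p D ψ ^ 2 * fmn ψ i j I) * partitionFunction ψ I.length := by
        have := (hZ I.length).le
        gcongr _ * ?_ * _
        exact h.mul_partitionFunction_le_fmn i j I
    _ = _ := by ring

end QuasiMultiplicative

end Words

section Cylinders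

variable {A : Type}

/-- The word of the first `n` letters of a sequence, as a function on `Fin n`. -/
def initialBlock (n : ℕ) (x : ℕ → A) : Fin n → A := fun i ↦ x i

theorem ofFn_initialBlock (n : ℕ) (x : ℕ → A) : List.ofFn (initialBlock n x) = wordOf x n := rfl

@[simp]
theorem length_wordOf (x : ℕ → A) (n : ℕ) : (wordOf x n).length = n := List.length_ofFn

theorem cyl_ofFn {n : ℕ} (w : Fin n → A) : cyl (List.ofFn w) = initialBlock n ⁻¹' {w} := by
  ext x
  constructor
  · exact fun hx ↦ funext fun i ↦ by simpa [initialBlock] using hx (i.cast (by simp))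
  · rintro rfl i
    simp [initialBlock]

theorem mem_cyl_iff {x : ℕ → A} {I : List A} : x ∈ cyl I ↔ wordOf x I.length = I := by
  have mem_iff : x ∈ cyl (List.ofFn I.get) ↔ wordOf x I.length = List.ofFn I.get := by
    rw [cyl_ofFn, ← ofFn_initialBlock, List.ofFn_inj]
    rfl
  rwa [List.ofFn_get] at mem_iff

theorem mem_cyl_wordOf (x : ℕ → A) (n : ℕ) : x ∈ cyl (wordOf x n) :=
  mem_cyl_iff.2 (by rw [length_wordOf])

theorem iterate_shiftMap_apply (n : ℕ) (x : ℕ → A) (i : ℕ) : shiftMap^[n] x i = x (n + i) := by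
  induction n generalizing x with
  | zero => simp
  | succ n ih =>
    rw [Function.iterate_succ_apply, ih, shiftMap]
    congr 1
    lia

theorem wordOf_add (x : ℕ → A) (m n : ℕ) :
    wordOf x (m + n) = wordOf x m ++ wordOf (shiftMap^[m] x) n := by
  rw [wordOf, List.ofFn_add]
  simp [wordOf, iterate_shiftMap_apply]

theorem cyl_append (I J : List A) : cyl (I ++ J) = cyl I ∩ shiftMap^[I.length] ⁻¹' cyl J := by
  ext x
  rw [Set.mem_inter_iff, Set.mem_preimage]
  simp only [mem_cyl_iff, List.length_append, wordOf_add]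
  exact ⟨fun h ↦ List.append_inj h (by simp), fun h ↦ by rw [h.1, h.2]⟩

section Measurable

variable [MeasurableSpace A]

theorem measurable_initialBlock (n : ℕ) : Measurable (initialBlock n : (ℕ → A) → Fin n → A) :=
  measurable_pi_iff.2 fun i ↦ measurable_pi_apply (i : ℕ)

theorem exists_eq_preimage_initialBlock {s : Set (ℕ → A)}
    (hs : s ∈ measurableCylinders fun _ : ℕ ↦ A) :
    ∃ (n : ℕ) (T : Set (Fin n → A)), s = initialBlock n ⁻¹' T := by
  rw [measurableCylinders_nat] at hs
  simp only [Set.mem_iUnion, Set.mem_singleton_iff] at hs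
  obtain ⟨a, S, -, rfl⟩ := hs
  exact ⟨a + 1, {w | (fun i : Finset.Iic a ↦
    w ⟨i, Nat.lt_succ_of_le (Finset.mem_Iic.1 i.2)⟩) ∈ S}, rfl⟩

theorem measurable_shiftMap : Measurable (shiftMap : (ℕ → A) → ℕ → A) :=
  measurable_pi_iff.2 fun i ↦ measurable_pi_apply (i + 1)

theorem measurableSet_cyl [MeasurableSingletonClass A] (I : List A) :
    MeasurableSet (cyl I) := by
  rw [← List.ofFn_get I, cyl_ofFn]
  exact measurable_initialBlock _ (measurableSet_singleton _)

theorem ae_pos_measureReal_cyl [Countable A] (μ : Measure (ℕ → A)) [IsFiniteMeasure μ] :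
    ∀ᵐ x ∂μ, ∀ n, 0 < μ.real (cyl (wordOf x n)) := by
  have null : μ (⋃ I : {I : List A // μ (cyl I) = 0}, cyl I.1) = 0 :=
    measure_iUnion_null Subtype.prop
  filter_upwards [compl_mem_ae_iff.2 null] with x hx n
  rw [measureReal_def, ENNReal.toReal_pos_iff]
  refine ⟨pos_iff_ne_zero.2 fun h ↦ hx ?_, measure_lt_top _ _⟩
  exact Set.mem_iUnion.2 ⟨⟨_, h⟩, mem_cyl_wordOf x n⟩

end Measurable

section Topological

variable [TopologicalSpace A]

theorem continuous_shiftMap : Continuous (shiftMap : (ℕ → A) → ℕ → A) :=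
  continuous_pi fun i ↦ continuous_apply (i + 1)

theorem isClopen_cyl [DiscreteTopology A] (I : List A) : IsClopen (cyl I) := by
  rw [← List.ofFn_get I, cyl_ofFn]
  exact (isClopen_discrete _).preimage (continuous_pi fun i ↦ continuous_apply (i : ℕ))

end Topological

section Measure

variable [Fintype A] [MeasurableSpace A] [MeasurableSingletonClass A] {μ : Measure (ℕ → A)}
  [IsFiniteMeasure μ]

theorem sum_measureReal_cyl_inter (n : ℕ) (B : Set (ℕ → A)) :
    ∑ w : Fin n → A, μ.real (cyl (List.ofFn w) ∩ B) = μ.real B := by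
  have hπ (w : Fin n → A) := measurable_initialBlock n (measurableSet_singleton w)
  simp only [cyl_ofFn, ← measureReal_restrict_apply (hπ _)]
  rw [sum_measureReal_preimage_singleton _ fun w _ ↦ hπ w]
  simp

theorem sum_measureReal_cyl (n : ℕ) :
    ∑ w : Fin n → A, μ.real (cyl (List.ofFn w)) = μ.real Set.univ := by
  simpa using sum_measureReal_cyl_inter (μ := μ) n Set.univ

theorem sum_measureReal_cyl_append (I : List A) (n : ℕ) :
    ∑ v : Fin n → A, μ.real (cyl (I ++ List.ofFn v)) = μ.real (cyl I) := by
  have hσ : Measurable (shiftMap^[I.length] : (ℕ → A) → ℕ → A) := measurable_shiftMap.iterate _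
  have := sum_measureReal_cyl (μ := (μ.restrict (cyl I)).map shiftMap^[I.length]) n
  simpa only [map_measureReal_apply hσ (measurableSet_cyl _),
    map_measureReal_apply hσ MeasurableSet.univ, Set.preimage_univ, measureReal_restrict_apply_univ,
    measureReal_restrict_apply (hσ (measurableSet_cyl _)), Set.inter_comm _ (cyl I),
    ← cyl_append] using this

theorem sum_measureReal_append_cyl (n : ℕ) (I : List A) :
    ∑ u : Fin n → A, μ.real (cyl (List.ofFn u ++ I)) = μ.real (shiftMap^[n] ⁻¹' cyl I) := by
  simp only [cyl_append, List.length_ofFn]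
  exact sum_measureReal_cyl_inter n _

theorem integral_comp_wordOf (n : ℕ) (f : List A → ℝ) :
    ∫ x, f (wordOf x n) ∂μ =
      ∑ w : Fin n → A, μ.real (cyl (List.ofFn w)) * f (List.ofFn w) := by
  have hπ := measurable_initialBlock (A := A) n
  simp only [← ofFn_initialBlock]
  rw [← integral_map (f := fun w ↦ f (List.ofFn w)) hπ.aemeasurable
    Integrable.of_finite.aestronglyMeasurable, integral_fintype Integrable.of_finite]
  simp only [map_measureReal_apply hπ (measurableSet_singleton _), cyl_ofFn, smul_eq_mul]

theorem measureReal_preimage_initialBlock (n : ℕ) (T : Set (Fin n → A)) :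
    μ.real (initialBlock n ⁻¹' T) = ∑ w with w ∈ T, μ.real (cyl (List.ofFn w)) := by
  simp only [cyl_ofFn]
  rw [sum_measureReal_preimage_singleton _ fun w _ ↦
    measurable_initialBlock n (measurableSet_singleton w)]
  simp

end Measure

section Finite

variable [Finite A] [MeasurableSpace A] [MeasurableSingletonClass A] {μ : Measure (ℕ → A)}
  [IsFiniteMeasure μ]

theorem integrable_comp_wordOf (n : ℕ) (f : List A → ℝ) :
    Integrable (fun x ↦ f (wordOf x n)) μ :=
  (Integrable.of_finite (f := fun w ↦ f (List.ofFn w))).comp_measurable (measurable_initialBlock n)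

theorem measureReal_prod_mem_of_isClosed {ν : Measure (ℕ → A)} [IsFiniteMeasure ν]
    {C : Set (ℝ × ℝ)} (hC : IsClosed C)
    (h : ∀ n, ∀ T : Set (Fin n → A),
      (μ.real (initialBlock n ⁻¹' T), ν.real (initialBlock n ⁻¹' T)) ∈ C)
    {B : Set (ℕ → A)} (hB : MeasurableSet B) : (μ.real B, ν.real B) ∈ C := by
  refine hC.closure_subset_iff.2 (Set.range_subset_iff.2 fun T : Σ n, Set (Fin n → A) ↦ h T.1 T.2)
    (Metric.mem_closure_range_iff.2 fun ε hε ↦ ?_)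
  obtain ⟨s, hs, hsB⟩ := exists_measure_symmDiff_lt_of_generateFrom_isSetRing (μ := μ + ν)
    (isSetRing_measurableCylinders (α := fun _ : ℕ ↦ A))
    ⟨{Set.univ}, Set.countable_singleton _, by
      simpa using univ_mem_measurableCylinders fun _ : ℕ ↦ A, by simp⟩
    generateFrom_measurableCylinders.symm hB (ENNReal.ofReal_pos.2 hε)
  obtain ⟨n, T, rfl⟩ := exists_eq_preimage_initialBlock hs
  have hT := measurable_initialBlock n T.toFinite.measurableSet
  refine ⟨⟨n, T⟩, ?_⟩
  rw [dist_comm]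
  have sum_lt : μ.real (symmDiff (initialBlock n ⁻¹' T) B) +
      ν.real (symmDiff (initialBlock n ⁻¹' T) B) < ε := by
    rwa [← measureReal_add_apply, measureReal_def,
      ← ENNReal.lt_ofReal_iff_toReal_lt (measure_ne_top _ _)]
  have abs_sub_le (ρ : Measure (ℕ → A)) [IsFiniteMeasure ρ] :=
    abs_measureReal_sub_le_measureReal_symmDiff (μ := ρ) hT.nullMeasurableSet
      hB.nullMeasurableSet
  exact max_lt
    ((abs_sub_le μ).trans_lt ((le_add_of_nonneg_right measureReal_nonneg).trans_lt sum_lt))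
    ((abs_sub_le ν).trans_lt ((le_add_of_nonneg_left measureReal_nonneg).trans_lt sum_lt))

theorem mul_measureReal_le_of_forall_cyl {ν : Measure (ℕ → A)} [IsFiniteMeasure ν] {a b : ℝ}
    (h : ∀ I, a * μ.real (cyl I) ≤ b * ν.real (cyl I)) {B : Set (ℕ → A)}
    (hB : MeasurableSet B) : a * μ.real B ≤ b * ν.real B := by
  refine measureReal_prod_mem_of_isClosed (C := {p | a * p.1 ≤ b * p.2})
    (isClosed_le (by fun_prop) (by fun_prop)) (fun n T ↦ ?_) hB
  have := Fintype.ofFinite A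
  simp only [measureReal_preimage_initialBlock, Set.mem_ofPred_eq, Finset.mul_sum]
  exact Finset.sum_le_sum fun w _ ↦ h _

end Finite

end Cylinders

section Ergodic

variable {A : Type} [Finite A] [MeasurableSpace A] [MeasurableSingletonClass A]
  {μ : Measure (ℕ → A)} [IsFiniteMeasure μ] {p : ℕ} {F : ℝ}

theorem measureReal_cyl_mul_le_of_bridge (hF : 0 ≤ F)
    (h : ∀ I J, ∃ K : List A, K.length ≤ p ∧
      μ.real (cyl I) * μ.real (cyl J) ≤ F * μ.real (cyl (I ++ K ++ J)))
    (I : List A) {B : Set (ℕ → A)} (hB : MeasurableSet B) (hinv : shiftMap ⁻¹' B = B) :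
    μ.real (cyl I) * μ.real B ≤ F * (p + 1) * μ.real (B ∩ cyl I) := by
  let ν := ∑ k ∈ Finset.range (p + 1), (μ.restrict (cyl I)).map shiftMap^[I.length + k]
  have hν {s : Set (ℕ → A)} (hs : MeasurableSet s) : ν.real s =
      ∑ k ∈ Finset.range (p + 1), μ.real (shiftMap^[I.length + k] ⁻¹' s ∩ cyl I) := by
    have hσ (n : ℕ) := (measurable_shiftMap (A := A)).iterate n
    simp only [ν, measureReal_def, Measure.finsetSum_apply, Measure.map_apply (hσ _) hs,
      Measure.restrict_apply (hσ _ hs)]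
    exact ENNReal.toReal_sum fun k _ ↦ measure_ne_top _ _
  have cyl_le (J : List A) : μ.real (cyl I) * μ.real (cyl J) ≤ F * ν.real (cyl J) := by
    obtain ⟨K, hK, hle⟩ := h I J
    refine hle.trans (mul_le_mul_of_nonneg_left ?_ hF)
    have subset : cyl (I ++ K ++ J) ⊆ shiftMap^[I.length + K.length] ⁻¹' cyl J ∩ cyl I := by
      rw [cyl_append, cyl_append, List.length_append, Set.inter_comm]
      gcongr
      exact Set.inter_subset_left
    rw [hν (measurableSet_cyl J)]
    exact (measureReal_mono subset).trans (Finset.single_le_sum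
      (f := fun k ↦ μ.real (shiftMap^[I.length + k] ⁻¹' cyl J ∩ cyl I))
      (fun _ _ ↦ measureReal_nonneg) (by simpa [Nat.lt_succ_iff] using hK))
  have preimage_iterate (n : ℕ) : shiftMap^[n] ⁻¹' B = B := by
    rw [Set.preimage_iterate_eq, Function.iterate_fixed hinv]
  have := mul_measureReal_le_of_forall_cyl cyl_le hB
  simpa [hν hB, preimage_iterate, mul_assoc] using this

theorem preErgodic_of_bridge (hF : 0 ≤ F)
    (h : ∀ I J, ∃ K : List A, K.length ≤ p ∧
      μ.real (cyl I) * μ.real (cyl J) ≤ F * μ.real (cyl (I ++ K ++ J))) :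
    PreErgodic shiftMap μ where
  aeconst_set B hB hinv := by
    have cyl_le (I : List A) : μ.real B * μ.real (cyl I) ≤
        F * (p + 1) * (μ.restrict B).real (cyl I) := by
      rw [measureReal_restrict_apply (measurableSet_cyl I), Set.inter_comm, mul_comm]
      exact measureReal_cyl_mul_le_of_bridge hF h I hB hinv
    have := mul_measureReal_le_of_forall_cyl cyl_le hB.compl
    rw [measureReal_restrict_apply hB.compl, Set.compl_inter_self, measureReal_empty, mul_zero]
      at this
    have null : μ B = 0 ∨ μ Bᶜ = 0 := by
      rw [← measureReal_eq_zero_iff, ← measureReal_eq_zero_iff, ← mul_eq_zero]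
      exact this.antisymm (by positivity)
    exact eventuallyConst_set'.2 (null.imp ae_eq_empty.2 ae_eq_univ.2)

end Ergodic

section KrylovBogolyubov

variable {Ω : Type*} [MeasurableSpace Ω] {f : Ω → Ω}

/-- The average `(1/N) ∑_{i < N} ν ∘ f⁻ⁱ` of the first `N` push-forwards of a measure. -/
def orbitAverage (f : Ω → Ω) (N : ℕ) (ν : Measure Ω) : Measure Ω :=
  (N : ℝ≥0)⁻¹ • ∑ i ∈ Finset.range N, ν.map f^[i]

theorem measureReal_orbitAverage (hf : Measurable f) (N : ℕ) (ν : Measure Ω) [IsFiniteMeasure ν]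
    {B : Set Ω} (hB : MeasurableSet B) :
    (orbitAverage f N ν).real B = (N : ℝ)⁻¹ * ∑ i ∈ Finset.range N, ν.real (f^[i] ⁻¹' B) := by
  rw [orbitAverage, measureReal_nnreal_smul_apply, measureReal_def, Measure.finsetSum_apply,
    ENNReal.toReal_sum fun _ _ ↦ measure_ne_top _ _]
  simp only [Measure.map_apply (hf.iterate _) hB, measureReal_def, NNReal.coe_inv,
    NNReal.coe_natCast]

theorem isProbabilityMeasure_orbitAverage (hf : Measurable f) {N : ℕ} (hN : N ≠ 0)
    (ν : Measure Ω) [IsProbabilityMeasure ν] : IsProbabilityMeasure (orbitAverage f N ν) := by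
  have := measureReal_orbitAverage hf N ν MeasurableSet.univ
  refine isProbabilityMeasure_iff_real.2 (this.trans ?_)
  simp [hN]

theorem measureReal_orbitAverage_mem_Icc (hf : Measurable f) {N : ℕ} (hN : N ≠ 0)
    {ν : Measure Ω} [IsFiniteMeasure ν] {B : Set Ω} (hB : MeasurableSet B) {a b : ℝ}
    (h : ∀ i < N, ν.real (f^[i] ⁻¹' B) ∈ Set.Icc a b) :
    (orbitAverage f N ν).real B ∈ Set.Icc a b := by
  rw [measureReal_orbitAverage hf N ν hB, Finset.mul_sum]
  simp only [← smul_eq_mul]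
  exact (convex_Icc a b).sum_mem (w := fun _ ↦ (N : ℝ)⁻¹) (fun _ _ ↦ by positivity) (by simp [hN])
    fun i hi ↦ h i (Finset.mem_range.1 hi)

theorem integral_orbitAverage (hf : Measurable f) (N : ℕ) (ν : Measure Ω) {g : Ω → ℝ}
    (hg : Measurable g) (hint : ∀ i, Integrable (fun x ↦ g (f^[i] x)) ν) :
    ∫ x, g x ∂orbitAverage f N ν = ∫ x, birkhoffAverage ℝ f g N x ∂ν := by
  simp only [birkhoffAverage, birkhoffSum]
  rw [orbitAverage, integral_smul_nnreal_measure, integral_finsetSum_measure, integral_smul,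
    integral_finsetSum _ fun i _ ↦ hint i]
  · simp only [integral_map (hf.iterate _).aemeasurable hg.aestronglyMeasurable]
    rfl
  · exact fun i _ ↦ (integrable_map_measure hg.aestronglyMeasurable
      (hf.iterate i).aemeasurable).2 (hint i)

variable [TopologicalSpace Ω] [BorelSpace Ω]

theorem abs_integral_comp_sub_orbitAverage_le (hf : Continuous f) (N : ℕ) (ν : Measure Ω)
    [IsProbabilityMeasure ν] (g : BoundedContinuousFunction Ω ℝ) :
    |∫ x, g (f x) ∂orbitAverage f N ν - ∫ x, g x ∂orbitAverage f N ν| ≤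
      2 * ‖g‖ / N := by
  have hint (h : BoundedContinuousFunction Ω ℝ) (i : ℕ) : Integrable (fun x ↦ h (f^[i] x)) ν :=
    (h.compContinuous ⟨_, hf.iterate i⟩).integrable ν
  have hint' (h : BoundedContinuousFunction Ω ℝ) : Integrable (birkhoffAverage ℝ f h N) ν :=
    (integrable_finsetSum _ fun i _ ↦ hint h i).const_mul _
  let gf := g.compContinuous ⟨f, hf⟩
  have avg_comp (x : Ω) : birkhoffAverage ℝ f gf N x = birkhoffAverage ℝ f g N (f x) := by
    have (i : ℕ) : f (f^[i] x) = f^[i] (f x) := (Function.Commute.self_iterate f i).eq x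
    simp [gf, birkhoffAverage, birkhoffSum, this]
  change |∫ x, gf x ∂orbitAverage f N ν - _| ≤ _
  rw [integral_orbitAverage hf.measurable N ν gf.continuous.measurable (hint gf),
    integral_orbitAverage hf.measurable N ν g.continuous.measurable (hint g),
    ← integral_sub (hint' gf) (hint' g), ← Real.norm_eq_abs]
  refine (norm_integral_le_of_norm_le_const (C := 2 * ‖g‖ / N) (ae_of_all _ fun x ↦ ?_)).trans
    (by simp)
  rw [avg_comp, birkhoffAverage_apply_sub_birkhoffAverage, norm_smul, norm_inv, inv_mul_eq_div,
    RCLike.norm_natCast, ← dist_eq_norm]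
  gcongr
  exact g.dist_le_two_norm _ _

variable [HasOuterApproxClosed Ω]

theorem measurePreserving_of_tendsto_orbitAverage (hf : Continuous f) {L : Filter ℕ} [L.NeBot]
    (hL : L ≤ atTop) {ν avg : ℕ → ProbabilityMeasure Ω} {μ : ProbabilityMeasure Ω}
    (havg : ∀ᶠ N in L, (avg N : Measure Ω) = orbitAverage f N (ν N))
    (hμ : Tendsto avg L (𝓝 μ)) : MeasurePreserving f (μ : Measure Ω) μ := by
  refine ⟨hf.measurable, ?_⟩
  have : IsProbabilityMeasure ((μ : Measure Ω).map f) :=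
    Measure.isProbabilityMeasure_map hf.measurable.aemeasurable
  refine ext_of_forall_integral_eq_of_IsFiniteMeasure fun g ↦ ?_
  rw [integral_map hf.measurable.aemeasurable g.continuous.aestronglyMeasurable, ← sub_eq_zero]
  have integral_tendsto := ProbabilityMeasure.tendsto_iff_forall_integral_tendsto.1 hμ
  refine tendsto_nhds_unique ((integral_tendsto (g.compContinuous ⟨f, hf⟩)).sub
    (integral_tendsto g)) (squeeze_zero_norm' ?_
      ((tendsto_const_div_atTop_nhds_zero_nat (2 * ‖g‖)).mono_left hL))
  filter_upwards [havg] with N hN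
  rw [hN]
  exact abs_integral_comp_sub_orbitAverage_le hf N _ g

theorem exists_measurePreserving_of_eventually_mem_Icc [CompactSpace Ω] [T2Space Ω]
    (hf : Continuous f) (ν : ℕ → ProbabilityMeasure Ω) :
    ∃ μ : ProbabilityMeasure Ω, MeasurePreserving f (μ : Measure Ω) μ ∧
      ∀ (C : Set Ω) (a b : ℝ), IsClopen C →
        (∀ᶠ N in atTop, ∀ i < N, (ν N : Measure Ω).real (f^[i] ⁻¹' C) ∈ Set.Icc a b) →
          (μ : Measure Ω).real C ∈ Set.Icc a b := by
  let avg (N : ℕ) : ProbabilityMeasure Ω := if hN : N ≠ 0 then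
    ⟨orbitAverage f N (ν N), isProbabilityMeasure_orbitAverage hf.measurable hN _⟩ else ν 0
  have coe_avg : ∀ᶠ N in hyperfilter ℕ, (avg N : Measure Ω) = orbitAverage f N (ν N) := by
    filter_upwards [Nat.hyperfilter_le_atTop (eventually_ne_atTop 0)] with N hN
    simp [avg, hN]
  obtain ⟨μ, -, hμ⟩ := isCompact_univ.ultrafilter_le_nhds' ((hyperfilter ℕ).map avg) univ_mem
  replace hμ : Tendsto avg (hyperfilter ℕ) (𝓝 μ) := hμ
  refine ⟨μ, measurePreserving_of_tendsto_orbitAverage hf Nat.hyperfilter_le_atTop coe_avg hμ,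
    fun C a b hC h ↦ ?_⟩
  have measure_tendsto : Tendsto (fun N ↦ (avg N : Measure Ω).real C) (hyperfilter ℕ)
      (𝓝 ((μ : Measure Ω).real C)) :=
    (ENNReal.tendsto_toReal (measure_ne_top _ _)).comp
      (ProbabilityMeasure.tendsto_measure_of_null_frontier_of_tendsto' hμ
        (hC.frontier_eq ▸ measure_empty))
  refine isClosed_Icc.mem_of_tendsto measure_tendsto ?_
  filter_upwards [coe_avg, Nat.hyperfilter_le_atTop (h.and (eventually_ne_atTop 0))]
    with N hcoe hN
  rw [hcoe]
  exact measureReal_orbitAverage_mem_Icc hf.measurable hN.2 hC.isOpen.measurableSet hN.1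

end KrylovBogolyubov

section GibbsMeasure

variable {A : Type} {p : ℕ} {D P K : ℝ} {ψ : List A → ℝ}

/-- The Gibbs property `μ(I) ≍ e^{-|I| P} ψ(I)` with constant `K`, stated without division so that
it also says that words of weight zero are null. -/
structure IsGibbs [MeasurableSpace A] (ψ : List A → ℝ) (P K : ℝ) (μ : Measure (ℕ → A)) :
    Prop where
  pos : 0 < K
  le_measureReal_cyl : ∀ I : List A, Real.exp (-(I.length * P)) * ψ I ≤ K * μ.real (cyl I)
  measureReal_cyl_le : ∀ I : List A, μ.real (cyl I) ≤ K * (Real.exp (-(I.length * P)) * ψ I)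

namespace IsGibbs

variable [MeasurableSpace A] {μ : Measure (ℕ → A)}

theorem measureReal_cyl_pos_iff (h : IsGibbs ψ P K μ) {I : List A} :
    0 < μ.real (cyl I) ↔ 0 < ψ I := by
  have hexp := Real.exp_pos (-(I.length * P))
  constructor
  · intro hI
    have := hI.trans_le (h.measureReal_cyl_le I)
    rwa [mul_pos_iff_of_pos_left h.pos, mul_pos_iff_of_pos_left hexp] at this
  · intro hI
    exact pos_of_mul_pos_right ((mul_pos hexp hI).trans_le (h.le_measureReal_cyl I)) h.pos.le

theorem abs_log_le (h : IsGibbs ψ P K μ) {I : List A} (hI : 0 < ψ I) :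
    |Real.log (ψ I) - Real.log (μ.real (cyl I)) - I.length * P| ≤ Real.log K := by
  have hμ := h.measureReal_cyl_pos_iff.2 hI
  have hexp := Real.exp_pos (-(I.length * P))
  have lower := Real.log_le_log (mul_pos hexp hI) (h.le_measureReal_cyl I)
  have upper := Real.log_le_log hμ (h.measureReal_cyl_le I)
  rw [Real.log_mul hexp.ne' hI.ne', Real.log_exp, Real.log_mul h.pos.ne' hμ.ne'] at lower
  rw [Real.log_mul h.pos.ne' (mul_pos hexp hI).ne', Real.log_mul hexp.ne' hI.ne', Real.log_exp]
    at upper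
  rw [abs_le]
  constructor <;> linarith

theorem exists_bridge (h : IsGibbs ψ P K μ) (hψ : QuasiMultiplicative p D ψ) (I J : List A) :
    ∃ L : List A, L.length ≤ p ∧ μ.real (cyl I) * μ.real (cyl J) ≤
      K ^ 3 * D * Real.exp (p * |P|) * μ.real (cyl (I ++ L ++ J)) := by
  obtain ⟨L, hL, hle⟩ := hψ.exists_bridge I J
  have hK := h.pos
  have hD := hψ.pos
  have := hψ.nonneg I
  have := hψ.nonneg J
  have exp_le : Real.exp (L.length * P) ≤ Real.exp (p * |P|) :=
    Real.exp_le_exp.2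
      ((mul_le_mul_of_nonneg_left (le_abs_self P) L.length.cast_nonneg).trans (by gcongr))
  have exp_split : Real.exp (-(I.length * P)) * Real.exp (-(J.length * P)) =
      Real.exp (L.length * P) * Real.exp (-((I ++ L ++ J).length * P)) := by
    rw [← Real.exp_add, ← Real.exp_add]
    congr 1
    push_cast [List.length_append]
    ring
  have hμ := h.le_measureReal_cyl (I ++ L ++ J)
  refine ⟨L, hL, ?_⟩
  calc μ.real (cyl I) * μ.real (cyl J)
      ≤ K * (Real.exp (-(I.length * P)) * ψ I) * (K * (Real.exp (-(J.length * P)) * ψ J)) := by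
        gcongr
        · exact h.measureReal_cyl_le I
        · exact h.measureReal_cyl_le J
    _ = K ^ 2 * (Real.exp (-(I.length * P)) * Real.exp (-(J.length * P))) * (ψ I * ψ J) := by ring
    _ ≤ K ^ 2 * (Real.exp (L.length * P) * Real.exp (-((I ++ L ++ J).length * P))) *
          (D * ψ (I ++ L ++ J)) := by
        rw [exp_split]
        gcongr
    _ = K ^ 2 * D * Real.exp (L.length * P) *
          (Real.exp (-((I ++ L ++ J).length * P)) * ψ (I ++ L ++ J)) := by ring
    _ ≤ K ^ 2 * D * Real.exp (p * |P|) * (K * μ.real (cyl (I ++ L ++ J))) := by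
        gcongr ?_ * ?_
        · exact mul_nonneg (Real.exp_pos _).le (hψ.nonneg _)
        · gcongr
    _ = K ^ 3 * D * Real.exp (p * |P|) * μ.real (cyl (I ++ L ++ J)) := by ring

variable [Finite A] [MeasurableSingletonClass A] [IsFiniteMeasure μ]

theorem ergodic (h : IsGibbs ψ P K μ) (hψ : QuasiMultiplicative p D ψ)
    (hinv : MeasurePreserving shiftMap μ μ) : Ergodic shiftMap μ where
  toMeasurePreserving := hinv
  toPreErgodic :=
    have := h.pos
    have := hψ.pos
    preErgodic_of_bridge (by positivity) (h.exists_bridge hψ)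

end IsGibbs

section FiniteLevel

variable [Fintype A] [MeasurableSpace A] [MeasurableSingletonClass A]

theorem fmn_measureReal_cyl (μ : Measure (ℕ → A)) [IsFiniteMeasure μ] (i j : ℕ) (I : List A) :
    fmn (fun J ↦ μ.real (cyl J)) i j I = μ.real (shiftMap^[i] ⁻¹' cyl I) := by
  simp only [fmn, sum_measureReal_cyl_append, sum_measureReal_append_cyl]

theorem exists_probabilityMeasure_cyl_eq [Nonempty A] (n : ℕ) {q : List A → ℝ}
    (hq : ∀ I, 0 ≤ q I) (hsum : partitionFunction q n = 1) :
    ∃ ν : ProbabilityMeasure (ℕ → A), ∀ I : List A, I.length = n →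
      (ν : Measure (ℕ → A)).real (cyl I) = q I := by
  let pmf : PMF (Fin n → A) := .ofFintype (fun w ↦ ENNReal.ofReal (q (List.ofFn w))) (by
    rw [← ENNReal.ofReal_sum_of_nonneg fun _ _ ↦ hq _]
    exact ENNReal.ofReal_eq_one.2 hsum)
  let extend (w : Fin n → A) (i : ℕ) : A := if hi : i < n then w ⟨i, hi⟩ else Classical.arbitrary A
  have hextend : Measurable extend := Measurable.of_discrete
  refine ⟨⟨pmf.toMeasure.map extend, Measure.isProbabilityMeasure_map hextend.aemeasurable⟩, ?_⟩
  rintro I rfl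
  have preimage_cyl : extend ⁻¹' cyl I = {I.get} := by
    ext w
    simp [cyl, extend, funext_iff]
  change (pmf.toMeasure.map extend).real (cyl I) = q I
  rw [map_measureReal_apply hextend (measurableSet_cyl I), preimage_cyl, measureReal_def,
    PMF.toMeasure_apply_singleton _ _ (measurableSet_singleton _)]
  simp [pmf, hq]

namespace QuasiMultiplicative

theorem exists_measureReal_preimage_cyl_mem_Icc (hψ : QuasiMultiplicative p D ψ) (n : ℕ) :
    ∃ ν : ProbabilityMeasure (ℕ → A), ∀ (I : List A) (i : ℕ), i + I.length ≤ n →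
      (ν : Measure (ℕ → A)).real (shiftMap^[i] ⁻¹' cyl I) ∈
        Set.Icc (((D * bridgeConst p D ψ) ^ 2)⁻¹ * (ψ I / partitionFunction ψ I.length))
          ((D * bridgeConst p D ψ) ^ 2 * (ψ I / partitionFunction ψ I.length)) := by
  have hZ := hψ.partitionFunction_pos
  have hE : 0 < (D * bridgeConst p D ψ) ^ 2 := pow_pos (mul_pos hψ.pos hψ.bridgeConst_pos) 2
  have : Nonempty A := by
    obtain ⟨I, hI, -⟩ := hψ.exists_pos
    exact ⟨I.head hI⟩
  obtain ⟨ν, hν⟩ := exists_probabilityMeasure_cyl_eq n (q := fun I ↦ ψ I / partitionFunction ψ n)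
    (fun I ↦ div_nonneg (hψ.nonneg I) (hZ n).le)
    (by rw [partitionFunction, ← Finset.sum_div]; exact div_self (hZ n).ne')
  refine ⟨ν, fun I i hn ↦ ?_⟩
  obtain ⟨j, rfl⟩ := Nat.exists_eq_add_of_le hn
  have hfmn : (ν : Measure (ℕ → A)).real (shiftMap^[i] ⁻¹' cyl I) =
      fmn ψ i j I / partitionFunction ψ (i + I.length + j) := by
    rw [← fmn_measureReal_cyl (ν : Measure (ℕ → A)) i j I]
    simp only [fmn, Finset.sum_div]
    exact Finset.sum_congr rfl fun u _ ↦ Finset.sum_congr rfl fun v _ ↦ hν _ (by simp [add_assoc])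
  rw [hfmn, Set.mem_Icc, inv_mul_le_iff₀ hE, ← mul_div_assoc, ← mul_div_assoc,
    div_le_div_iff₀ (hZ _) (hZ _), div_le_div_iff₀ (hZ _) (hZ _), mul_assoc, mul_assoc]
  exact ⟨hψ.mul_partitionFunction_add_le i j I, hψ.fmn_mul_partitionFunction_le i j I⟩

end QuasiMultiplicative

end FiniteLevel

namespace QuasiMultiplicative

theorem exp_neg_mul_le [Fintype A] (hψ : QuasiMultiplicative p D ψ) {n : ℕ} {C : ℝ}
    (hP : |Real.log (partitionFunction ψ n) - n * P| ≤ C) :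
    Real.exp (-(n * P)) ≤ Real.exp C * (partitionFunction ψ n)⁻¹ := by
  rw [← Real.exp_log (hψ.partitionFunction_pos n), ← Real.exp_neg, ← Real.exp_add,
    Real.exp_le_exp]
  linarith [(abs_le.1 hP).2]

theorem inv_partitionFunction_le [Fintype A] (hψ : QuasiMultiplicative p D ψ) {n : ℕ} {C : ℝ}
    (hP : |Real.log (partitionFunction ψ n) - n * P| ≤ C) :
    (partitionFunction ψ n)⁻¹ ≤ Real.exp C * Real.exp (-(n * P)) := by
  rw [← Real.exp_log (hψ.partitionFunction_pos n), ← Real.exp_neg, ← Real.exp_add,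
    Real.exp_le_exp]
  linarith [(abs_le.1 hP).1]

theorem exists_isGibbs [Fintype A] [TopologicalSpace A] [DiscreteTopology A]
    [MeasurableSpace A] [BorelSpace A] (hψ : QuasiMultiplicative p D ψ) {C : ℝ}
    (hP : ∀ n : ℕ, |Real.log (partitionFunction ψ n) - n * P| ≤ C) :
    ∃ μ : ProbabilityMeasure (ℕ → A), MeasurePreserving shiftMap (μ : Measure (ℕ → A)) μ ∧
      IsGibbs ψ P ((D * bridgeConst p D ψ) ^ 2 * Real.exp C) (μ : Measure (ℕ → A)) := by
  set E := (D * bridgeConst p D ψ) ^ 2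
  have hE : 0 < E := pow_pos (mul_pos hψ.pos hψ.bridgeConst_pos) 2
  choose ν hν using fun n ↦ hψ.exists_measureReal_preimage_cyl_mem_Icc (n := n)
  obtain ⟨μ, hinv, hμ⟩ := exists_measurePreserving_of_eventually_mem_Icc continuous_shiftMap
    fun N ↦ ν (2 * N)
  have hcyl (I : List A) : (μ : Measure (ℕ → A)).real (cyl I) ∈
      Set.Icc (E⁻¹ * (ψ I / partitionFunction ψ I.length))
        (E * (ψ I / partitionFunction ψ I.length)) := by
    refine hμ _ _ _ (isClopen_cyl I) ?_
    filter_upwards [eventually_ge_atTop I.length] with N hN i hi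
    exact hν _ I i (by lia)
  have hI := hψ.nonneg
  refine ⟨μ, hinv, mul_pos hE (Real.exp_pos C), fun I ↦ ?_, fun I ↦ ?_⟩
  · calc Real.exp (-(I.length * P)) * ψ I
        ≤ Real.exp C * (partitionFunction ψ I.length)⁻¹ * ψ I :=
          mul_le_mul_of_nonneg_right (hψ.exp_neg_mul_le (hP _)) (hI I)
      _ = E * Real.exp C * (E⁻¹ * (ψ I / partitionFunction ψ I.length)) := by field_simp
      _ ≤ E * Real.exp C * (μ : Measure (ℕ → A)).real (cyl I) :=
          mul_le_mul_of_nonneg_left (hcyl I).1 (by positivity)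
  · calc (μ : Measure (ℕ → A)).real (cyl I)
        ≤ E * (ψ I / partitionFunction ψ I.length) := (hcyl I).2
      _ = E * ψ I * (partitionFunction ψ I.length)⁻¹ := by ring
      _ ≤ E * ψ I * (Real.exp C * Real.exp (-(I.length * P))) :=
          mul_le_mul_of_nonneg_left (hψ.inv_partitionFunction_le (hP _))
            (mul_nonneg hE.le (hI I))
      _ = E * Real.exp C * (Real.exp (-(I.length * P)) * ψ I) := by ring

end QuasiMultiplicative

end GibbsMeasure

section Thermodynamics

variable {A : Type} [MeasurableSpace A] {p : ℕ} {C D P K : ℝ} {q r ψ : List A → ℝ}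
  {μ η : Measure (ℕ → A)}

/-- The mean `∑ μ(I) log ψ(I)` over the words `I` of length `n`. It is only meaningful when `ψ` is
positive on the words charged by `μ`, as `Real.log 0 = 0`. -/
def blockEnergy (ψ : List A → ℝ) (μ : Measure (ℕ → A)) (n : ℕ) : ℝ :=
  ∫ x, Real.log (ψ (wordOf x n)) ∂μ

/-- The entropy `-∑ μ(I) log μ(I)` of the partition into cylinders of length `n`. -/
def blockEntropy (μ : Measure (ℕ → A)) (n : ℕ) : ℝ :=
  -blockEnergy (fun I ↦ μ.real (cyl I)) μ n

theorem ae_pos_of_forall_cyl [Countable A] [IsFiniteMeasure μ]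
    (hψ : ∀ I, 0 < μ.real (cyl I) → 0 < ψ I) : ∀ᵐ x ∂μ, ∀ n, 0 < ψ (wordOf x n) :=
  (ae_pos_measureReal_cyl μ).mono fun _ hx n ↦ hψ _ (hx n)

theorem IsGibbs.ae_pos [Countable A] [IsFiniteMeasure μ] (h : IsGibbs ψ P K μ) :
    ∀ᵐ x ∂μ, ∀ n, 0 < ψ (wordOf x n) :=
  ae_pos_of_forall_cyl fun _ ↦ h.measureReal_cyl_pos_iff.1

theorem blockEntropy_nonneg [IsProbabilityMeasure μ] (n : ℕ) : 0 ≤ blockEntropy μ n :=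
  neg_nonneg.2 (integral_nonpos fun _ ↦ Real.log_nonpos measureReal_nonneg measureReal_le_one)

theorem blockEnergy_const [IsProbabilityMeasure μ] (c : ℝ) (n : ℕ) :
    blockEnergy (fun _ ↦ c) μ n = Real.log c := by
  simp [blockEnergy]

variable [MeasurableSingletonClass A]

section Finite

variable [Finite A]

theorem blockEnergy_mul [IsFiniteMeasure μ] {n : ℕ} (hq : ∀ᵐ x ∂μ, 0 < q (wordOf x n))
    (hr : ∀ᵐ x ∂μ, 0 < r (wordOf x n)) :
    blockEnergy (fun I ↦ q I * r I) μ n = blockEnergy q μ n + blockEnergy r μ n := by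
  simp only [blockEnergy]
  rw [← integral_add (integrable_comp_wordOf n fun I ↦ Real.log (q I))
    (integrable_comp_wordOf n fun I ↦ Real.log (r I))]
  refine integral_congr_ae ?_
  filter_upwards [hq, hr] with x hqx hrx
  exact Real.log_mul hqx.ne' hrx.ne'

theorem blockEnergy_mono [IsFiniteMeasure μ] {n : ℕ} (hq : ∀ᵐ x ∂μ, 0 < q (wordOf x n))
    (hqr : ∀ᵐ x ∂μ, q (wordOf x n) ≤ r (wordOf x n)) : blockEnergy q μ n ≤ blockEnergy r μ n := by
  refine integral_mono_ae (integrable_comp_wordOf n fun I ↦ Real.log (q I))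
    (integrable_comp_wordOf n fun I ↦ Real.log (r I)) ?_
  filter_upwards [hq, hqr] with x hqx hqrx
  exact Real.log_le_log hqx hqrx

theorem integral_comp_wordOf_shiftMap [IsFiniteMeasure μ] (hμ : MeasurePreserving shiftMap μ μ)
    (m n : ℕ) (f : List A → ℝ) :
    ∫ x, f (wordOf (shiftMap^[m] x) n) ∂μ = ∫ x, f (wordOf x n) ∂μ := by
  have hm := hμ.iterate m
  rw [← integral_map (f := fun x ↦ f (wordOf x n)) hm.aemeasurable
    (integrable_comp_wordOf n f).aestronglyMeasurable, hm.map_eq]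

theorem blockEnergy_take_mul_drop [IsFiniteMeasure μ] (hμ : MeasurePreserving shiftMap μ μ)
    (hψ : ∀ᵐ x ∂μ, ∀ n, 0 < ψ (wordOf x n)) (m n : ℕ) :
    blockEnergy (fun I ↦ ψ (I.take m) * ψ (I.drop m)) μ (m + n) =
      blockEnergy ψ μ m + blockEnergy ψ μ n := by
  have hshift := (hμ.iterate m).quasiMeasurePreserving.ae hψ
  rw [blockEnergy_mul]
  · simp [blockEnergy, wordOf_add,
      integral_comp_wordOf_shiftMap hμ m n fun I ↦ Real.log (ψ I)]
  · filter_upwards [hψ] with x hx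
    simpa [wordOf_add] using hx m
  · filter_upwards [hshift] with x hx
    simpa [wordOf_add] using hx n

end Finite

section Fintype

variable [Fintype A]

-- Gibbs' inequality, from `log t ≤ t - 1` at `t = q(I) / μ(I)`.
theorem blockEnergy_add_blockEntropy_le_sub_one [IsProbabilityMeasure μ] {n : ℕ}
    (hq : ∀ I, 0 ≤ q I) (hpos : ∀ᵐ x ∂μ, 0 < q (wordOf x n)) :
    blockEnergy q μ n + blockEntropy μ n ≤ partitionFunction q n - 1 := by
  have mul_div_le (I : List A) : μ.real (cyl I) * (q I / μ.real (cyl I)) ≤ q I := by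
    rcases eq_or_ne (μ.real (cyl I)) 0 with h | h
    · simpa [h] using hq I
    · exact (mul_div_cancel₀ _ h).le
  calc blockEnergy q μ n + blockEntropy μ n
      = ∫ x, (Real.log (q (wordOf x n)) - Real.log (μ.real (cyl (wordOf x n)))) ∂μ := by
        rw [integral_sub (integrable_comp_wordOf n fun I ↦ Real.log (q I))
          (integrable_comp_wordOf n fun I ↦ Real.log (μ.real (cyl I))), blockEntropy,
          ← sub_eq_add_neg]
        rfl
    _ ≤ ∫ x, (q (wordOf x n) / μ.real (cyl (wordOf x n)) - 1) ∂μ := by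
        refine integral_mono_ae
          (integrable_comp_wordOf n fun I ↦ Real.log (q I) - Real.log (μ.real (cyl I)))
          (integrable_comp_wordOf n fun I ↦ q I / μ.real (cyl I) - 1) ?_
        filter_upwards [hpos, ae_pos_measureReal_cyl μ] with x hx hμ
        rw [← Real.log_div hx.ne' (hμ n).ne']
        exact Real.log_le_sub_one_of_pos (div_pos hx (hμ n))
    _ = ∑ w : Fin n → A, μ.real (cyl (List.ofFn w)) *
          (q (List.ofFn w) / μ.real (cyl (List.ofFn w))) - 1 := by
        rw [integral_sub (integrable_comp_wordOf n fun I ↦ q I / μ.real (cyl I))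
          (integrable_const 1), integral_comp_wordOf n fun I ↦ q I / μ.real (cyl I)]
        simp
    _ ≤ partitionFunction q n - 1 := by
        gcongr
        exact Finset.sum_le_sum fun w _ ↦ mul_div_le _

theorem blockEnergy_add_blockEntropy_le_log [IsProbabilityMeasure μ] {n : ℕ} (hψ : ∀ I, 0 ≤ ψ I)
    (hpos : ∀ᵐ x ∂μ, 0 < ψ (wordOf x n)) (hZ : 0 < partitionFunction ψ n) :
    blockEnergy ψ μ n + blockEntropy μ n ≤ Real.log (partitionFunction ψ n) := by
  have hZ' := inv_pos.2 hZ
  have gibbs := blockEnergy_add_blockEntropy_le_sub_one (μ := μ) (n := n)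
    (fun I ↦ mul_nonneg (hψ I) hZ'.le) (hpos.mono fun x hx ↦ mul_pos hx hZ')
  have normalized : partitionFunction (fun I ↦ ψ I * (partitionFunction ψ n)⁻¹) n = 1 := by
    simp only [partitionFunction, ← Finset.sum_mul]
    exact mul_inv_cancel₀ hZ.ne'
  rw [blockEnergy_mul hpos (.of_forall fun _ ↦ hZ'), blockEnergy_const, Real.log_inv,
    normalized] at gibbs
  linarith

end Fintype

variable [Finite A]

theorem blockEntropy_add_le [IsProbabilityMeasure μ] (hμ : MeasurePreserving shiftMap μ μ)
    (m n : ℕ) : blockEntropy μ (m + n) ≤ blockEntropy μ m + blockEntropy μ n := by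
  have := Fintype.ofFinite A
  have hpos := ae_pos_measureReal_cyl μ
  have hshift := (hμ.iterate m).quasiMeasurePreserving.ae hpos
  have gibbs := blockEnergy_add_blockEntropy_le_sub_one (μ := μ) (n := m + n)
    (q := fun I ↦ μ.real (cyl (I.take m)) * μ.real (cyl (I.drop m)))
    (fun I ↦ mul_nonneg measureReal_nonneg measureReal_nonneg) <| by
      filter_upwards [hpos, hshift] with x hx hx'
      simpa [wordOf_add] using mul_pos (hx m) (hx' n)
  have product_eq_one :
      partitionFunction (fun I ↦ μ.real (cyl (I.take m)) * μ.real (cyl (I.drop m))) (m + n) =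
        1 := by
    rw [partitionFunction,
      sum_ofFn_append m n fun I ↦ μ.real (cyl (I.take m)) * μ.real (cyl (I.drop m))]
    simp [← Finset.mul_sum, sum_measureReal_cyl]
  rw [blockEnergy_take_mul_drop (ψ := fun I ↦ μ.real (cyl I)) hμ hpos, product_eq_one] at gibbs
  simp only [blockEntropy] at gibbs ⊢
  linarith

theorem blockEnergy_add_le [IsProbabilityMeasure μ] (hμ : MeasurePreserving shiftMap μ μ)
    (hψ : QuasiMultiplicative p D ψ) (hpos : ∀ᵐ x ∂μ, ∀ n, 0 < ψ (wordOf x n)) (m n : ℕ) :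
    blockEnergy ψ μ (m + n) ≤ Real.log D + (blockEnergy ψ μ m + blockEnergy ψ μ n) := by
  have hshift := (hμ.iterate m).quasiMeasurePreserving.ae hpos
  rw [← blockEnergy_take_mul_drop hμ hpos, ← blockEnergy_const (μ := μ) D (m + n),
    ← blockEnergy_mul (.of_forall fun _ ↦ hψ.pos)]
  · refine blockEnergy_mono (hpos.mono fun x hx ↦ hx _) (.of_forall fun x ↦ ?_)
    simpa [mul_assoc] using hψ.append_le ((wordOf x (m + n)).take m) ((wordOf x (m + n)).drop m)
  · filter_upwards [hpos, hshift] with x hx hx'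
    simpa [wordOf_add] using mul_pos (hx m) (hx' n)

-- Gibbs' inequality for the measure `μ` tilted by the density `exp (s 1_T)`.
theorem mul_measureReal_preimage_initialBlock_le [IsFiniteMeasure μ] [IsProbabilityMeasure η]
    {n : ℕ} (hpos : ∀ᵐ x ∂η, 0 < μ.real (cyl (wordOf x n))) (s : ℝ) (T : Set (Fin n → A)) :
    s * η.real (initialBlock n ⁻¹' T) +
        (blockEnergy (fun I ↦ μ.real (cyl I)) η n + blockEntropy η n) ≤
      μ.real Set.univ + (Real.exp s - 1) * μ.real (initialBlock n ⁻¹' T) - 1 := by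
  have := Fintype.ofFinite A
  have hT := measurable_initialBlock n T.toFinite.measurableSet
  let g (I : List A) : ℝ := if I ∈ List.ofFn '' T then s else 0
  have g_wordOf (x : ℕ → A) :
      g (wordOf x n) = (initialBlock n ⁻¹' T).indicator (fun _ ↦ s) x := by
    simp only [g, ← ofFn_initialBlock, List.ofFn_injective.mem_set_image, Set.indicator,
      Set.mem_preimage]
  have exp_g (x : ℕ → A) : Real.exp (g (wordOf x n)) =
      1 + (initialBlock n ⁻¹' T).indicator (fun _ ↦ Real.exp s - 1) x := by
    rw [g_wordOf]
    by_cases hx : x ∈ initialBlock n ⁻¹' T <;> simp [hx]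
  have gibbs := blockEnergy_add_blockEntropy_le_sub_one (μ := η) (n := n)
    (q := fun I ↦ Real.exp (g I) * μ.real (cyl I))
    (fun I ↦ mul_nonneg (Real.exp_pos _).le measureReal_nonneg)
    (hpos.mono fun x hx ↦ mul_pos (Real.exp_pos _) hx)
  have energy_exp_g : blockEnergy (fun I ↦ Real.exp (g I)) η n =
      s * η.real (initialBlock n ⁻¹' T) := by
    simp only [blockEnergy, Real.log_exp, g_wordOf, integral_indicator_const s hT, smul_eq_mul,
      mul_comm]
  have partition_eq : partitionFunction (fun I ↦ Real.exp (g I) * μ.real (cyl I)) n =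
      μ.real Set.univ + (Real.exp s - 1) * μ.real (initialBlock n ⁻¹' T) := by
    simp only [partitionFunction, mul_comm (Real.exp _)]
    rw [← integral_comp_wordOf n fun I ↦ Real.exp (g I)]
    simp only [exp_g]
    rw [integral_add (integrable_const 1) ((integrable_const _).indicator hT),
      integral_indicator_const _ hT]
    simp [mul_comm]
  rwa [blockEnergy_mul (.of_forall fun _ ↦ Real.exp_pos _) hpos, energy_exp_g, partition_eq,
    add_assoc] at gibbs

theorem mul_measureReal_le_of_le_blockEnergy_add_blockEntropy [IsFiniteMeasure μ]
    [IsProbabilityMeasure η] (hpos : ∀ᵐ x ∂η, ∀ n, 0 < μ.real (cyl (wordOf x n)))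
    (hC : ∀ n, -C ≤ blockEnergy (fun I ↦ μ.real (cyl I)) η n + blockEntropy η n) (s : ℝ)
    {B : Set (ℕ → A)} (hB : MeasurableSet B) :
    s * η.real B + 1 ≤ C + μ.real Set.univ + (Real.exp s - 1) * μ.real B := by
  refine measureReal_prod_mem_of_isClosed (μ := μ) (ν := η)
    (C := {t | s * t.2 + 1 ≤ C + μ.real Set.univ + (Real.exp s - 1) * t.1})
    (isClosed_le (by fun_prop) (by fun_prop)) (fun n T ↦ ?_) hB
  have tilted_le := mul_measureReal_preimage_initialBlock_le (hpos.mono fun x hx ↦ hx n) s T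
  simp only [Set.mem_ofPred_eq]
  linarith [hC n]

theorem absolutelyContinuous_of_le_blockEnergy_add_blockEntropy [IsFiniteMeasure μ]
    [IsProbabilityMeasure η] (hpos : ∀ᵐ x ∂η, ∀ n, 0 < μ.real (cyl (wordOf x n)))
    (hC : ∀ n, -C ≤ blockEnergy (fun I ↦ μ.real (cyl I)) η n + blockEntropy η n) : η ≪ μ := by
  refine .mk fun B hB hμB ↦ ?_
  have bound (s : ℝ) : s * η.real B ≤ C + μ.real Set.univ - 1 := by
    have := mul_measureReal_le_of_le_blockEnergy_add_blockEntropy hpos hC s hB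
    rw [measureReal_def μ B, hμB, ENNReal.toReal_zero, mul_zero] at this
    linarith
  by_contra hηB
  have hη : 0 < η.real B := ENNReal.toReal_pos hηB (measure_ne_top _ _)
  have := bound ((C + μ.real Set.univ) / η.real B)
  rw [div_mul_cancel₀ _ hη.ne'] at this
  linarith

namespace IsGibbs

theorem abs_blockEnergy_sub_le [IsProbabilityMeasure η] (h : IsGibbs ψ P K μ)
    (hpos : ∀ᵐ x ∂η, ∀ n, 0 < ψ (wordOf x n)) (n : ℕ) :
    |blockEnergy ψ η n - blockEnergy (fun I ↦ μ.real (cyl I)) η n - n * P| ≤ Real.log K := by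
  have hψ := integrable_comp_wordOf (μ := η) n fun I ↦ Real.log (ψ I)
  have hμ := integrable_comp_wordOf (μ := η) n fun I ↦ Real.log (μ.real (cyl I))
  have integral_eq : blockEnergy ψ η n - blockEnergy (fun I ↦ μ.real (cyl I)) η n - n * P =
      ∫ x, (Real.log (ψ (wordOf x n)) - Real.log (μ.real (cyl (wordOf x n))) - n * P) ∂η := by
    rw [integral_sub (integrable_comp_wordOf n fun I ↦ Real.log (ψ I) - Real.log (μ.real (cyl I)))
      (integrable_const _), integral_sub hψ hμ]
    simp [blockEnergy]
  rw [integral_eq, ← Real.norm_eq_abs]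
  refine (norm_integral_le_of_norm_le_const (C := Real.log K) (hpos.mono fun x hx ↦ ?_)).trans_eq
    (by simp)
  simpa using h.abs_log_le (hx n)

theorem exists_abs_blockEnergy_sub_le [IsProbabilityMeasure μ] (h : IsGibbs ψ P K μ)
    (hψ : QuasiMultiplicative p D ψ) (hμ : MeasurePreserving shiftMap μ μ) :
    ∃ L C, ∀ n : ℕ, |blockEnergy ψ μ n - n * L| ≤ C ∧ |blockEntropy μ n - n * (P - L)| ≤ C := by
  have energy_add_entropy (n : ℕ) := abs_le.1 (h.abs_blockEnergy_sub_le h.ae_pos n)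
  have quasi_additive (m n : ℕ) :
      |blockEnergy ψ μ (m + n) - blockEnergy ψ μ m - blockEnergy ψ μ n| ≤
        Real.log D + 3 * Real.log K := by
    have hD := Real.log_nonneg hψ.one_le
    have energy_le := blockEnergy_add_le hμ hψ h.ae_pos m n
    have entropy_le := blockEntropy_add_le hμ m n
    have h₁ := energy_add_entropy m
    have h₂ := energy_add_entropy n
    have h₃ := energy_add_entropy (m + n)
    simp only [blockEntropy] at entropy_le
    push_cast at h₃
    rw [abs_le]
    constructor <;> linarith
  obtain ⟨L, hL⟩ := exists_forall_abs_sub_mul_le quasi_additive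
  refine ⟨L, Real.log D + 3 * Real.log K + Real.log K, fun n ↦ ?_⟩
  have h₁ := abs_le.1 (hL n)
  have h₂ := energy_add_entropy n
  simp only [blockEntropy, abs_le]
  constructor <;> constructor <;> linarith

end IsGibbs

end Thermodynamics

section Language

variable {A : Type} {X : Set (ℕ → A)} {p : ℕ} {φ : List A → ℝ}

theorem Lang.of_append_left {I J : List A} (h : Lang X (I ++ J)) : Lang X I :=
  h.mono (Set.inter_subset_inter_left X (by rw [cyl_append]; exact Set.inter_subset_left))

theorem Lang.of_append_right (hX : shiftMap '' X ⊆ X) {I J : List A} (h : Lang X (I ++ J)) :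
    Lang X J := by
  obtain ⟨x, hx, hxX⟩ := h
  rw [cyl_append] at hx
  exact ⟨shiftMap^[I.length] x, hx.2, (Set.mapsTo_iff_image_subset.2 hX).iterate _ hxX⟩

theorem lang_wordOf {x : ℕ → A} (hx : x ∈ X) (n : ℕ) : Lang X (wordOf x n) :=
  ⟨x, mem_cyl_wordOf x n, hx⟩

/-- The extension by zero of a weight on the language of `X` to all words. -/
def langWeight (X : Set (ℕ → A)) (φ : List A → ℝ) (I : List A) : ℝ := if Lang X I then φ I else 0

theorem langWeight_of_lang {I : List A} (hI : Lang X I) : langWeight X φ I = φ I := if_pos hI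

theorem lang_of_langWeight_pos {I : List A} (hI : 0 < langWeight X φ I) : Lang X I := by
  by_contra h
  simp [langWeight, h] at hI

theorem Dw.exists_quasiMultiplicative (hφ : Dw X p φ) (hX : shiftMap '' X ⊆ X) :
    ∃ D, QuasiMultiplicative p D (langWeight X φ) := by
  obtain ⟨hnonneg, ⟨I₀, hI₀, hne, hpos⟩, c, hc, hc_le, happend, hbridge⟩ := hφ
  have nonneg (I : List A) : 0 ≤ langWeight X φ I := by
    rw [langWeight]
    split_ifs with hI
    exacts [hnonneg I hI, le_rfl]
  refine ⟨c⁻¹, (one_le_inv₀ hc).2 hc_le, nonneg, ⟨I₀, hne, by rwa [langWeight_of_lang hI₀]⟩,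
    fun I J ↦ ?_, fun I J ↦ ?_⟩
  · by_cases hIJ : Lang X (I ++ J)
    · rw [langWeight_of_lang hIJ, langWeight_of_lang hIJ.of_append_left,
        langWeight_of_lang (hIJ.of_append_right hX)]
      exact happend I J hIJ
    · rw [langWeight, if_neg hIJ]
      exact mul_nonneg (mul_nonneg (inv_pos.2 hc).le (nonneg I)) (nonneg J)
  · by_cases hIJ : Lang X I ∧ Lang X J
    · obtain ⟨K, hK, hlang, hle⟩ := hbridge I J hIJ.1 hIJ.2
      refine ⟨K, hK, ?_⟩
      rwa [langWeight_of_lang hIJ.1, langWeight_of_lang hIJ.2, langWeight_of_lang hlang,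
        le_inv_mul_iff₀ hc]
    · refine ⟨[], Nat.zero_le p, ?_⟩
      have : langWeight X φ I * langWeight X φ J = 0 := by
        rcases not_and_or.1 hIJ with h | h <;> simp [langWeight, h]
      rw [this]
      exact mul_nonneg (inv_pos.2 hc).le (nonneg _)

theorem mem_of_forall_lang_wordOf [TopologicalSpace A] (hX : IsClosed X) {x : ℕ → A}
    (hx : ∀ n, Lang X (wordOf x n)) : x ∈ X := by
  choose y hy hyX using hx
  refine hX.mem_of_tendsto (b := atTop) (tendsto_pi_nhds.2 fun i ↦ ?_) (.of_forall hyX)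
  refine tendsto_const_nhds.congr' ?_
  filter_upwards [eventually_gt_atTop i] with n hn
  have eq_block : initialBlock n (y n) = initialBlock n x :=
    List.ofFn_injective (by simpa [← ofFn_initialBlock] using mem_cyl_iff.1 (hy n))
  exact (congr_fun eq_block ⟨i, hn⟩).symm

end Language

section Potentials

theorem intlog_eq_integral {Ω : Type*} [MeasurableSpace Ω] {μ : Measure Ω} {g : Ω → ℝ}
    (hpos : ∀ᵐ x ∂μ, 0 < g x) (hg : Integrable (fun x ↦ Real.log (g x)) μ) :
    intlog μ g = (∫ x, Real.log (g x) ∂μ : ℝ) := by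
  have negPart : ∫⁻ x, (if g x ≤ 0 then (⊤ : ℝ≥0∞) else ENNReal.ofReal (-Real.log (g x))) ∂μ =
      ∫⁻ x, ENNReal.ofReal (-Real.log (g x)) ∂μ :=
    lintegral_congr_ae (hpos.mono fun x hx ↦ if_neg hx.not_ge)
  rw [intlog, negPart, integral_eq_lintegral_pos_part_sub_lintegral_neg_part hg, EReal.coe_sub,
    EReal.coe_ennreal_toReal hg.lintegral_lt_top.ne,
    EReal.coe_ennreal_toReal hg.fun_neg.lintegral_lt_top.ne]

theorem intlog_eq_bot {Ω : Type*} [MeasurableSpace Ω] {μ : Measure Ω} {g : Ω → ℝ}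
    (hg : Measurable g) (hpos : ¬ ∀ᵐ x ∂μ, 0 < g x) : intlog μ g = ⊥ := by
  rw [intlog, lintegral_eq_top_of_measure_eq_top_ne_zero (f := fun x ↦ if g x ≤ 0 then ⊤ else _),
    EReal.coe_ennreal_top, EReal.sub_top]
  · exact (Measurable.ite (measurableSet_le hg measurable_const) measurable_const
      (Real.measurable_log.comp hg).neg.ennreal_ofReal).aemeasurable
  · refine fun h ↦ hpos (measure_mono_null (fun x hx ↦ ?_) h)
    exact if_pos (not_lt.1 (by simpa using hx))

theorem intlog_congr {Ω : Type*} [MeasurableSpace Ω] {μ : Measure Ω} {f g : Ω → ℝ}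
    (h : f =ᵐ[μ] g) : intlog μ f = intlog μ g := by
  rw [intlog, intlog]
  congr 2
  all_goals exact lintegral_congr_ae (h.mono fun x hx ↦ by simp only [hx])

variable {A : Type} [Finite A] [MeasurableSpace A] [MeasurableSingletonClass A]
  {p n : ℕ} {C D L : ℝ} {ψ : List A → ℝ} {η : Measure (ℕ → A)}

theorem phiStar_genPot_eq_bot (hψ : QuasiMultiplicative p D ψ)
    (hpos : ¬ ∀ᵐ x ∂η, ∀ n, 0 < ψ (wordOf x n)) : PhiStar η (genPot ψ) = ⊥ := by
  obtain ⟨n, hn⟩ := not_forall.1 (mt ae_all_iff.2 hpos)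
  have eventually_bot : ∀ᶠ m : ℕ in atTop,
      (((m : ℝ)⁻¹ : ℝ) : EReal) * intlog η (genPot ψ m) = ⊥ := by
    filter_upwards [eventually_ge_atTop n, eventually_gt_atTop 0] with m hnm hm
    obtain ⟨k, rfl⟩ := Nat.exists_eq_add_of_le hnm
    have measurable_genPot : Measurable (genPot ψ (n + k)) :=
      (Measurable.of_discrete (f := fun w ↦ ψ (List.ofFn w))).comp (measurable_initialBlock _)
    rw [intlog_eq_bot measurable_genPot fun h ↦ hn (h.mono fun x hx ↦ ?_),
      EReal.coe_mul_bot_of_pos (by positivity)]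
    rw [genPot, wordOf_add] at hx
    exact hψ.pos_of_append hx
  exact (tendsto_const_nhds.congr' (eventually_bot.mono fun _ h ↦ h.symm)).liminf_eq

variable [IsProbabilityMeasure η]

theorem intlog_genPot (hpos : ∀ᵐ x ∂η, ∀ n, 0 < ψ (wordOf x n)) (n : ℕ) :
    intlog η (genPot ψ n) = (blockEnergy ψ η n : ℝ) :=
  intlog_eq_integral (hpos.mono fun _ hx ↦ hx n)
    (integrable_comp_wordOf n fun I ↦ Real.log (ψ I))

theorem phiStar_genPot_eq (hpos : ∀ᵐ x ∂η, ∀ n, 0 < ψ (wordOf x n))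
    (hL : ∀ n : ℕ, |blockEnergy ψ η n - n * L| ≤ C) : PhiStar η (genPot ψ) = (L : ℝ) := by
  simp only [PhiStar, intlog_genPot hpos, ← EReal.coe_mul, inv_mul_eq_div]
  exact (EReal.tendsto_coe.2 (tendsto_div_of_abs_sub_mul_le hL)).liminf_eq

theorem phiStar_genPot_le (hη : MeasurePreserving shiftMap η η) (hψ : QuasiMultiplicative p D ψ)
    (hpos : ∀ᵐ x ∂η, ∀ n, 0 < ψ (wordOf x n)) (hn : n ≠ 0) :
    PhiStar η (genPot ψ) ≤ ((blockEnergy ψ η n + Real.log D) / n : ℝ) := by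
  have subadditive : Subadditive fun n ↦ blockEnergy ψ η n + Real.log D := fun m n ↦ by
    linarith [blockEnergy_add_le hη hψ hpos m n]
  simp only [PhiStar, intlog_genPot hpos, ← EReal.coe_mul, inv_mul_eq_div]
  refine EReal.le_of_forall_lt_iff_le.1 fun z hz ↦ liminf_le_of_frequently_le' ?_
  refine Eventually.frequently ?_
  filter_upwards [subadditive.eventually_div_lt_of_div_lt hn (EReal.coe_lt_coe_iff.1 hz)] with m hm
  refine EReal.coe_le_coe_iff.2 (le_trans ?_ hm.le)
  gcongr
  exact le_add_of_nonneg_right (Real.log_nonneg hψ.one_le)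

end Potentials

section Support

variable {A : Type} [MeasurableSpace A] {n : ℕ} {C L : ℝ} {φ : List A → ℝ} {X : Set (ℕ → A)}
  {η : Measure (ℕ → A)}

theorem ae_mem_of_forall_lang [Countable A] [TopologicalSpace A] [IsFiniteMeasure η]
    (hX : IsClosed X) (h : ∀ I, 0 < η.real (cyl I) → Lang X I) : ∀ᵐ x ∂η, x ∈ X :=
  (ae_pos_measureReal_cyl η).mono fun _ hx ↦ mem_of_forall_lang_wordOf hX fun n ↦ h _ (hx n)

theorem genPot_langWeight_ae_eq (h : ∀ᵐ x ∂η, x ∈ X) (n : ℕ) :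
    genPot (langWeight X φ) n =ᵐ[η] genPot φ n :=
  h.mono fun _ hx ↦ langWeight_of_lang (lang_wordOf hx n)

theorem blockEnergy_langWeight (h : ∀ᵐ x ∂η, x ∈ X) (n : ℕ) :
    blockEnergy (langWeight X φ) η n = blockEnergy φ η n :=
  integral_congr_ae ((genPot_langWeight_ae_eq h n).fun_comp Real.log)

theorem phiStar_langWeight (h : ∀ᵐ x ∂η, x ∈ X) :
    PhiStar η (genPot (langWeight X φ)) = PhiStar η (genPot φ) := by
  simp only [PhiStar, intlog_congr (genPot_langWeight_ae_eq h _)]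

theorem mw_eq (h : ∀ᵐ x ∂η, x ∈ X) (I : List A) : mw X η I = η.real (cyl I) :=
  congr_arg ENNReal.toReal (measure_inter_conull (mem_ae_iff.1 h))

variable [Fintype A] [MeasurableSingletonClass A]

theorem sum_mw_mul_log [IsFiniteMeasure η] (h : ∀ᵐ x ∂η, x ∈ X) (n : ℕ) (f : List A → ℝ) :
    ∑ w : Fin n → A, mw X η (List.ofFn w) * Real.log (f (List.ofFn w)) = blockEnergy f η n := by
  rw [blockEnergy, integral_comp_wordOf n fun I ↦ Real.log (f I)]
  simp only [mw_eq h]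

theorem hblock_eq [IsFiniteMeasure η] (h : ∀ᵐ x ∂η, x ∈ X) (n : ℕ) :
    Hblock X η n = blockEntropy η n := by
  rw [Hblock, sum_mw_mul_log h n (mw X η), blockEntropy, funext (mw_eq h)]

theorem ent_eq [IsFiniteMeasure η] (h : ∀ᵐ x ∂η, x ∈ X)
    (hL : ∀ n : ℕ, |blockEntropy η n - n * L| ≤ C) : ent X η = L := by
  simp only [ent, hblock_eq h]
  exact (tendsto_div_of_abs_sub_mul_le hL).liminf_eq

theorem ent_le [IsProbabilityMeasure η] (h : ∀ᵐ x ∂η, x ∈ X)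
    (hη : MeasurePreserving shiftMap η η) (hn : n ≠ 0) : ent X η ≤ blockEntropy η n / n := by
  have subadditive : Subadditive (blockEntropy η) := blockEntropy_add_le hη
  have bddBelow : BddBelow (Set.range fun n : ℕ ↦ blockEntropy η n / n) :=
    ⟨0, by rintro _ ⟨n, rfl⟩; exact div_nonneg (blockEntropy_nonneg n) n.cast_nonneg⟩
  simp only [ent, hblock_eq h]
  rw [(subadditive.tendsto_lim bddBelow).liminf_eq]
  exact subadditive.lim_le_div bddBelow hn

end Support

section Equilibrium

variable {A : Type} [MeasurableSpace A]
  {p n : ℕ} {C D K P : ℝ} {φ ψ : List A → ℝ} {X : Set (ℕ → A)}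
  {μ η : ProbabilityMeasure (ℕ → A)}

theorem mem_MInv_iff (hX : MeasurableSet X) : η ∈ MInv X ↔
    MeasurePreserving shiftMap (η : Measure (ℕ → A)) η ∧
      ∀ᵐ x ∂(η : Measure (ℕ → A)), x ∈ X :=
  ⟨fun h ↦ ⟨⟨measurable_shiftMap, h.1⟩, (mem_ae_iff_prob_eq_one hX).2 h.2⟩,
    fun h ↦ ⟨h.1.map_eq, (mem_ae_iff_prob_eq_one hX).1 h.2⟩⟩

variable [Fintype A]

theorem eqSet_eq_singleton_of_forall {Φ : ℕ → (ℕ → A) → ℝ} (hμ : μ ∈ MInv X)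
    (hmax : ∀ η ∈ MInv X, eqVal X Φ η ≤ eqVal X Φ μ)
    (huniq : ∀ η ∈ MInv X, eqVal X Φ μ ≤ eqVal X Φ η → η = μ) : EqSet X Φ = {μ} := by
  have sup_eq : ⨆ η ∈ MInv X, eqVal X Φ η = eqVal X Φ μ :=
    le_antisymm (iSup₂_le hmax) (le_iSup₂_of_le μ hμ le_rfl)
  ext η
  rw [EqSet, Set.mem_ofPred_eq, sup_eq, Set.mem_singleton_iff]
  exact ⟨fun h ↦ huniq η h.1 h.2.ge, by rintro rfl; exact ⟨hμ, rfl⟩⟩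

variable [MeasurableSingletonClass A]

theorem eqVal_genPot_le (hψ : QuasiMultiplicative p D ψ)
    (hη : MeasurePreserving shiftMap (η : Measure (ℕ → A)) η)
    (hηX : ∀ᵐ x ∂(η : Measure (ℕ → A)), x ∈ X)
    (hpos : ∀ᵐ x ∂(η : Measure (ℕ → A)), ∀ n, 0 < ψ (wordOf x n)) (hn : n ≠ 0) :
    eqVal X (genPot ψ) η ≤ ((blockEnergy ψ (η : Measure (ℕ → A)) n +
      blockEntropy (η : Measure (ℕ → A)) n + Real.log D) / n : ℝ) := by
  rw [add_right_comm, add_div, EReal.coe_add]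
  exact add_le_add (phiStar_genPot_le hη hψ hpos hn) (EReal.coe_le_coe_iff.2 (ent_le hηX hη hn))

theorem ae_pos_of_eqVal_ne_bot (hψ : QuasiMultiplicative p D ψ)
    (h : eqVal X (genPot ψ) η ≠ ⊥) : ∀ᵐ x ∂(η : Measure (ℕ → A)), ∀ n, 0 < ψ (wordOf x n) := by
  by_contra hpos
  exact h (by rw [eqVal, phiStar_genPot_eq_bot hψ hpos, EReal.bot_add])

theorem eqVal_genPot_le_pressure (hψ : QuasiMultiplicative p D ψ)
    (hP : ∀ n : ℕ, |Real.log (partitionFunction ψ n) - n * P| ≤ C)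
    (hη : MeasurePreserving shiftMap (η : Measure (ℕ → A)) η)
    (hηX : ∀ᵐ x ∂(η : Measure (ℕ → A)), x ∈ X) : eqVal X (genPot ψ) η ≤ P := by
  rcases eq_or_ne (eqVal X (genPot ψ) η) ⊥ with hbot | hbot
  · exact hbot.trans_le bot_le
  have hpos := ae_pos_of_eqVal_ne_bot hψ hbot
  have tendsto_P : Tendsto (fun n : ℕ ↦ (Real.log (partitionFunction ψ n) + Real.log D) / n)
      atTop (𝓝 P) := by
    simpa [add_div] using
      (tendsto_div_of_abs_sub_mul_le hP).add (tendsto_const_div_atTop_nhds_zero_nat (Real.log D))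
  refine ge_of_tendsto (EReal.tendsto_coe.2 tendsto_P) ?_
  filter_upwards [eventually_ne_atTop 0] with n hn
  refine (eqVal_genPot_le hψ hη hηX hpos hn).trans (EReal.coe_le_coe_iff.2 ?_)
  gcongr
  exact blockEnergy_add_blockEntropy_le_log hψ.nonneg (hpos.mono fun x hx ↦ hx n)
    (hψ.partitionFunction_pos n)

/-- An equilibrium state `η` loses at most a constant amount of pressure on every block, which
bounds its entropy relative to the Gibbs measure `μ` on all blocks simultaneously. -/
theorem IsGibbs.eq_of_le_eqVal (hμ : IsGibbs ψ P K (μ : Measure (ℕ → A)))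
    (hψ : QuasiMultiplicative p D ψ) (hμσ : MeasurePreserving shiftMap (μ : Measure (ℕ → A)) μ)
    (hη : MeasurePreserving shiftMap (η : Measure (ℕ → A)) η)
    (hηX : ∀ᵐ x ∂(η : Measure (ℕ → A)), x ∈ X) (hP : P ≤ eqVal X (genPot ψ) η) : η = μ := by
  have hpos := ae_pos_of_eqVal_ne_bot hψ (ne_bot_of_le_ne_bot (EReal.coe_ne_bot P) hP)
  have pressure_le (n : ℕ) :
      n * P ≤ blockEnergy ψ (η : Measure (ℕ → A)) n + blockEntropy (η : Measure (ℕ → A)) n +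
        Real.log D := by
    rcases eq_or_ne n 0 with rfl | hn
    · have energy_le := blockEnergy_add_le hη hψ hpos 0 0
      have entropy_nonneg := blockEntropy_nonneg (μ := (η : Measure (ℕ → A))) 0
      rw [add_zero] at energy_le
      rw [Nat.cast_zero, zero_mul]
      linarith
    · rw [← le_div_iff₀' (by positivity)]
      exact EReal.coe_le_coe_iff.1 (hP.trans (eqVal_genPot_le hψ hη hηX hpos hn))
  have absolutelyContinuous : (η : Measure (ℕ → A)) ≪ μ := by
    refine absolutelyContinuous_of_le_blockEnergy_add_blockEntropy
      (C := Real.log K + Real.log D)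
      (hpos.mono fun x hx n ↦ hμ.measureReal_cyl_pos_iff.2 (hx n)) fun n ↦ ?_
    have energy_le := (abs_le.1 (hμ.abs_blockEnergy_sub_le hpos n)).2
    linarith [pressure_le n]
  exact ProbabilityMeasure.toMeasure_injective
    ((hμ.ergodic hψ hμσ).eq_of_absolutelyContinuous hη absolutelyContinuous)

theorem IsGibbs.eqSet_eq_singleton (hμ : IsGibbs (langWeight X φ) P K (μ : Measure (ℕ → A)))
    (hX : MeasurableSet X) (hψ : QuasiMultiplicative p D (langWeight X φ))
    (hP : ∀ n : ℕ, |Real.log (partitionFunction (langWeight X φ) n) - n * P| ≤ C)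
    (hμσ : MeasurePreserving shiftMap (μ : Measure (ℕ → A)) μ)
    (hμX : ∀ᵐ x ∂(μ : Measure (ℕ → A)), x ∈ X) (hval : eqVal X (genPot φ) μ = P) :
    EqSet X (genPot φ) = {μ} := by
  have eqVal_eq {η : ProbabilityMeasure (ℕ → A)} (hηX : ∀ᵐ x ∂(η : Measure (ℕ → A)), x ∈ X) :
      eqVal X (genPot φ) η = eqVal X (genPot (langWeight X φ)) η := by
    rw [eqVal, eqVal, phiStar_langWeight hηX]
  refine eqSet_eq_singleton_of_forall ((mem_MInv_iff hX).2 ⟨hμσ, hμX⟩) (fun η hη ↦ ?_) fun η hη ↦ ?_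
  all_goals
    obtain ⟨hησ, hηX⟩ := (mem_MInv_iff hX).1 hη
    rw [hval, eqVal_eq hηX]
  · exact eqVal_genPot_le_pressure hψ hP hησ hηX
  · exact hμ.eq_of_le_eqVal hψ hμσ hησ hηX

end Equilibrium

end

/-- Theorem 5.5 / `thm-3.1`: a potential generated by `φ ∈ D_w(X,p)` has a
unique equilibrium state `μ`; `μ` is ergodic, has the Gibbs property
`μ(I) ≍ e^{−nP} φ(I)` with `P = lim (1/n) log Σ_{J ∈ L_n(X)} φ(J)`, and satisfies
`Σ μ(I) log φ(I) = n Φ_*(μ) + O(1)`, `Σ μ(I) log μ(I) = −n h_μ(σ_X) + O(1)`. -/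
theorem weighted_eq_states_stmt_15 {A : Type} [Fintype A] [TopologicalSpace A]
    [DiscreteTopology A] [MeasurableSpace A] [BorelSpace A]
    (X : Set (ℕ → A)) (hX : IsSubshift X)
    (p : ℕ) (φ : List A → ℝ) (hφ : Dw X p φ) :
    ∃ μ : ProbabilityMeasure (ℕ → A),
      EqSet X (genPot φ) = {μ} ∧
      Ergodic shiftMap (μ : Measure (ℕ → A)) ∧
      ∃ P : ℝ,
        Tendsto (fun n : ℕ =>
            Real.log (∑ w : Fin n → A,
              if Lang X (List.ofFn w) then φ (List.ofFn w) else 0) / n)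
          atTop (nhds P) ∧
        (∃ c > (0:ℝ), ∀ n : ℕ, 1 ≤ n → ∀ w : Fin n → A, Lang X (List.ofFn w) →
          c⁻¹ * (Real.exp (-(n * P)) * φ (List.ofFn w)) ≤
              mw X (μ : Measure (ℕ → A)) (List.ofFn w) ∧
            mw X (μ : Measure (ℕ → A)) (List.ofFn w) ≤
              c * (Real.exp (-(n * P)) * φ (List.ofFn w))) ∧
        (∃ Pst : ℝ, PhiStar (μ : Measure (ℕ → A)) (genPot φ) = ((Pst : ℝ) : EReal) ∧
          ∃ c' : ℝ, ∀ n : ℕ, 1 ≤ n →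
            |(∑ w : Fin n → A, mw X (μ : Measure (ℕ → A)) (List.ofFn w) *
                Real.log (φ (List.ofFn w))) - n * Pst| ≤ c' ∧
            |(∑ w : Fin n → A, mw X (μ : Measure (ℕ → A)) (List.ofFn w) *
                Real.log (mw X (μ : Measure (ℕ → A)) (List.ofFn w))) +
              n * ent X (μ : Measure (ℕ → A))| ≤ c') := by
  obtain ⟨D, hψ⟩ := hφ.exists_quasiMultiplicative hX.2.2
  obtain ⟨P, C, hP⟩ := hψ.exists_pressure
  obtain ⟨μ, hμσ, hμ⟩ := hψ.exists_isGibbs hP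
  have hμX : ∀ᵐ x ∂(μ : Measure (ℕ → A)), x ∈ X := ae_mem_of_forall_lang hX.2.1.isClosed
    fun I hI ↦ lang_of_langWeight_pos (hμ.measureReal_cyl_pos_iff.1 hI)
  obtain ⟨L, C', hL⟩ := hμ.exists_abs_blockEnergy_sub_le hψ hμσ
  have hΦ : PhiStar (μ : Measure (ℕ → A)) (genPot φ) = (L : ℝ) := by
    rw [← phiStar_langWeight hμX]
    exact phiStar_genPot_eq hμ.ae_pos fun n ↦ (hL n).1
  have hent : ent X (μ : Measure (ℕ → A)) = P - L := ent_eq hμX fun n ↦ (hL n).2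
  have hval : eqVal X (genPot φ) μ = P := by
    rw [eqVal, hΦ, hent, ← EReal.coe_add, add_sub_cancel]
  refine ⟨μ, hμ.eqSet_eq_singleton hX.2.1.isClosed.measurableSet hψ hP hμσ hμX hval,
    hμ.ergodic hψ hμσ, P, tendsto_div_of_abs_sub_mul_le hP, ⟨_, hμ.pos, fun n _ w hw ↦ ?_⟩,
    L, hΦ, C', fun n _ ↦ ?_⟩
  · rw [mw_eq hμX, inv_mul_le_iff₀ hμ.pos, ← langWeight_of_lang (φ := φ) hw]
    simpa using And.intro (hμ.le_measureReal_cyl (List.ofFn w))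
      (hμ.measureReal_cyl_le (List.ofFn w))
  · rw [sum_mw_mul_log hμX, ← blockEnergy_langWeight hμX, sum_mw_mul_log hμX, funext (mw_eq hμX),
      hent, ← abs_neg (_ + _), neg_add']
    exact hL n
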